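/- arXiv:1812.04987 — 2 statements merged into one kernel-verified Lean document; each statement's English description precedes it below -/
import Mathlib

section
/- Let G be an infinite locally finite quasi-transitive connected graph and let (G1, G2) be a factorisation of G, realised by a tree amalgamation G1 ∗_T G2, such that G1 is infinite, G2 is finite and the amalgamating tree T is not a star (i.e., T has diameter greater than 2). Then G is quasi-isometric to a non-trivial tree amalgamation G1 ∗ G1 of two copies of G1. -/
open SimpleGraph

universe u v

/-! ### Quasi-isometries -/

/-- `f` is a `(γ, c)`-quasi-isometry from `G` to `H`. -/
def IsQIWith {V : Type u} {W : Type v} (G : SimpleGraph V) (H : SimpleGraph W)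
    (γ c : ℝ) (f : V → W) : Prop :=
  (∀ u v : V, γ⁻¹ * (G.dist u v : ℝ) - c ≤ (H.dist (f u) (f v) : ℝ) ∧
      (H.dist (f u) (f v) : ℝ) ≤ γ * (G.dist u v : ℝ) + c) ∧
  ∀ w : W, ∃ x : V, (H.dist w (f x) : ℝ) ≤ c

/-- `G` and `H` are quasi-isometric. -/
def QuasiIsometric {V : Type u} {W : Type v} (G : SimpleGraph V) (H : SimpleGraph W) : Prop :=
  ∃ (γ c : ℝ) (f : V → W), 1 ≤ γ ∧ 0 ≤ c ∧ IsQIWith G H γ c f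

/-- `H` embeds quasi-isometrically into `G`. -/
def QIEmbeds {V : Type u} {W : Type v} (H : SimpleGraph V) (G : SimpleGraph W) : Prop :=
  ∃ (γ c : ℝ) (f : V → W), 1 ≤ γ ∧ 0 ≤ c ∧
    ∀ u v : V, γ⁻¹ * (H.dist u v : ℝ) - c ≤ (G.dist (f u) (f v) : ℝ) ∧
      (G.dist (f u) (f v) : ℝ) ≤ γ * (H.dist u v : ℝ) + c

/-! ### Basic graph properties -/

/-- Every vertex has finite degree. -/
def LocallyFiniteGraph {V : Type u} (G : SimpleGraph V) : Prop :=
  ∀ v : V, (G.neighborSet v).Finite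

/-- The automorphism group of `G` has finitely many orbits on the vertex set. -/
def QuasiTransitive {V : Type u} (G : SimpleGraph V) : Prop :=
  ∃ s : Set V, s.Finite ∧ ∀ v : V, ∃ u ∈ s, ∃ g : G ≃g G, g u = v

/-- The automorphism group of `G` acts transitively on the vertex set. -/
def VertexTransitive {V : Type u} (G : SimpleGraph V) : Prop :=
  ∀ u v : V, ∃ g : G ≃g G, g u = v

/-- `G` has exactly one end. -/
def OneEnded {V : Type u} (G : SimpleGraph V) : Prop :=
  Nonempty G.end ∧ Subsingleton G.end

/-- `G` and `H` have the same number of ends (in the sense `0, 1, 2, …, ∞`). -/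
def SameNumberOfEnds {V : Type u} {W : Type v} (G : SimpleGraph V) (H : SimpleGraph W) : Prop :=
  (Infinite G.end ∧ Infinite H.end) ∨
    (Finite G.end ∧ Finite H.end ∧ Nat.card G.end = Nat.card H.end)

/-- There is `n : ℕ` such that every two distinct ends of `G` can be separated by removing
at most `n` vertices. -/
def Accessible {V : Type u} (G : SimpleGraph V) : Prop :=
  ∃ n : ℕ, ∀ e e' : G.end, e ≠ e' →
    ∃ K : Finset V, K.card ≤ n ∧ e.val (Opposite.op K) ≠ e'.val (Opposite.op K)

/-- `T` is a tree all of whose vertices have degree `3`. -/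
def CubicTree {W : Type u} (T : SimpleGraph W) : Prop :=
  T.IsTree ∧ ∀ v : W, (T.neighborSet v).ncard = 3

/-! ### Tree amalgamations -/

/-- The bipartite graph on `VT1 ⊕ VT2` given by the relation `R`. -/
def bipGraph {VT1 VT2 : Type u} (R : VT1 → VT2 → Prop) : SimpleGraph (VT1 ⊕ VT2) :=
  SimpleGraph.fromRel fun x y =>
    match x, y with
    | Sum.inl a, Sum.inr b => R a b
    | _, _ => False

/-- All the data of a tree amalgamation `G1 ∗_T G2`: a semiregular tree (given by its
bipartition classes `VT1`, `VT2` and the adjacency relation `Tadj`), a labelling of the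
edges of the tree by pairs of indices from `K1 × K2` such that the labels at each vertex of
`VTi` biject with `Ki` in the `i`-th coordinate, families of adhesion sets `S1`, `S2`
(all of the same cardinality), and the gluing bijections `glue k l : S1 k → S2 l`. -/
structure TreeAmalgData {V1 V2 : Type u} (G1 : SimpleGraph V1) (G2 : SimpleGraph V2) :
    Type (u + 1) where
  VT1 : Type u
  VT2 : Type u
  K1 : Type u
  K2 : Type u
  Tadj : VT1 → VT2 → Prop
  isTree : (bipGraph Tadj).IsTree
  lab1 : ∀ a b, Tadj a b → K1
  lab2 : ∀ a b, Tadj a b → K2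
  lab1_bij : ∀ a : VT1, Function.Bijective fun b : {b : VT2 // Tadj a b} => lab1 a b.1 b.2
  lab2_bij : ∀ b : VT2, Function.Bijective fun a : {a : VT1 // Tadj a b} => lab2 a.1 b a.2
  S1 : K1 → Set V1
  S2 : K2 → Set V2
  S1_nonempty : ∀ k, (S1 k).Nonempty
  glue : K1 → K2 → V1 → V2
  glue_bij : ∀ k l, Set.BijOn (glue k l) (S1 k) (S2 l)

namespace TreeAmalgData

variable {V1 V2 : Type u} {G1 : SimpleGraph V1} {G2 : SimpleGraph V2}

/-- The vertex set of the graph `G1 + G2`. -/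
abbrev PlusV (D : TreeAmalgData G1 G2) : Type u := (D.VT1 × V1) ⊕ (D.VT2 × V2)

/-- The relation describing the edges added between the copies `G1^u` and `G2^v`. -/
def cross (D : TreeAmalgData G1 G2) (p : D.VT1 × V1) (q : D.VT2 × V2) : Prop :=
  ∃ h : D.Tadj p.1 q.1, p.2 ∈ D.S1 (D.lab1 p.1 q.1 h) ∧
    q.2 = D.glue (D.lab1 p.1 q.1 h) (D.lab2 p.1 q.1 h) p.2

def plusRel (D : TreeAmalgData G1 G2) : D.PlusV → D.PlusV → Prop
  | Sum.inl p, Sum.inl p' => p.1 = p'.1 ∧ G1.Adj p.2 p'.2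
  | Sum.inr q, Sum.inr q' => q.1 = q'.1 ∧ G2.Adj q.2 q'.2
  | Sum.inl p, Sum.inr q => D.cross p q
  | Sum.inr _, Sum.inl _ => False

/-- The graph `G1 + G2`: disjoint copies of `G1` and `G2` along the tree, together with the
added matching edges between adhesion sets. -/
def plusGraph (D : TreeAmalgData G1 G2) : SimpleGraph D.PlusV :=
  SimpleGraph.fromRel D.plusRel

/-- The relation identifying the endpoints of the added edges (which get contracted). -/
def idRel (D : TreeAmalgData G1 G2) : D.PlusV → D.PlusV → Prop :=
  fun x y => ∃ p q, x = Sum.inl p ∧ y = Sum.inr q ∧ D.cross p q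

/-- Vertex set of the tree amalgamation `G1 ∗_T G2`. -/
abbrev AmalgV (D : TreeAmalgData G1 G2) : Type u := Quot D.idRel

/-- The canonical contraction map `ψ : V(G1 + G2) → V(G1 ∗_T G2)`. -/
def toAmalg (D : TreeAmalgData G1 G2) : D.PlusV → D.AmalgV := Quot.mk _

/-- The tree amalgamation `G1 ∗_T G2`, obtained from `G1 + G2` by contracting all the
added edges. -/
def amalgGraph (D : TreeAmalgData G1 G2) : SimpleGraph D.AmalgV :=
  SimpleGraph.fromRel fun x y =>
    ∃ a b, x = D.toAmalg a ∧ y = D.toAmalg b ∧ D.plusGraph.Adj a b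

/-- The tree vertex at which a vertex of `G1 + G2` lives. -/
def site (D : TreeAmalgData G1 G2) : D.PlusV → D.VT1 ⊕ D.VT2
  | Sum.inl p => Sum.inl p.1
  | Sum.inr q => Sum.inr q.1

/-- The set of tree vertices hosting representatives of `x`; the identification size of `x`
is the number of its elements. -/
def support (D : TreeAmalgData G1 G2) (x : D.AmalgV) : Set (D.VT1 ⊕ D.VT2) :=
  {t | ∃ p, D.toAmalg p = x ∧ D.site p = t}

/-- Every vertex of `G1 ∗_T G2` has finite identification size. -/
def FiniteIdentification (D : TreeAmalgData G1 G2) : Prop :=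
  ∀ x : D.AmalgV, (D.support x).Finite

/-- All adhesion sets are finite. -/
def FiniteAdhesion (D : TreeAmalgData G1 G2) : Prop :=
  (∀ k, (D.S1 k).Finite) ∧ ∀ l, (D.S2 l).Finite

/-- The tree amalgamation is trivial: the contraction map restricts to a bijection on some
copy of `G1` or of `G2`. -/
def IsTrivial (D : TreeAmalgData G1 G2) : Prop :=
  (∃ a : D.VT1, Function.Bijective fun x : V1 => D.toAmalg (Sum.inl (a, x))) ∨
  ∃ b : D.VT2, Function.Bijective fun y : V2 => D.toAmalg (Sum.inr (b, y))

end TreeAmalgData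

/-- Some group of automorphisms of `G` acts with finitely many orbits on the vertices of `G`
and with finitely many orbits on the family `S` of adhesion sets of `G`. -/
def GoodAction {V : Type u} (G : SimpleGraph V) {K : Type u} (S : K → Set V) : Prop :=
  ∃ Γ : Subgroup (G ≃g G),
    (∃ s : Set V, s.Finite ∧ ∀ v : V, ∃ u ∈ s, ∃ g ∈ Γ, g u = v) ∧
    ∃ I : Set K, I.Finite ∧ ∀ k : K, ∃ k' ∈ I, ∃ g ∈ Γ, ⇑g '' S k' = S k

/-- A bundled graph. -/
structure BGraph : Type (u + 1) where
  V : Type u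
  G : SimpleGraph V

/-- `Z` is (isomorphic to) a tree amalgamation of `X` and `Y` of finite adhesion and finite
identification. -/
def AmalgStep (X Y Z : BGraph.{u}) : Prop :=
  ∃ D : TreeAmalgData X.G Y.G,
    D.FiniteAdhesion ∧ D.FiniteIdentification ∧ Nonempty (Z.G ≃g D.amalgGraph)

/-- `Z` is (isomorphic to) a tree amalgamation of `X` and `Y` of finite adhesion and finite
identification such that some group of automorphisms of each factor acts with finitely many
orbits on that factor and on the set of its adhesion sets. -/
def GoodAmalgStep (X Y Z : BGraph.{u}) : Prop :=
  ∃ D : TreeAmalgData X.G Y.G,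
    D.FiniteAdhesion ∧ D.FiniteIdentification ∧
    GoodAction X.G D.S1 ∧ GoodAction Y.G D.S2 ∧ Nonempty (Z.G ≃g D.amalgGraph)

/-- `Z` is obtained from the list `l` of graphs by iterated tree amalgamations of finite
adhesion and finite identification. -/
inductive IterAmalg : BGraph.{u} → List BGraph.{u} → Prop
  | single (X : BGraph) : IterAmalg X [X]
  | step {X Y Z : BGraph} {l1 l2 : List BGraph} :
      IterAmalg X l1 → IterAmalg Y l2 → AmalgStep X Y Z → IterAmalg Z (l1 ++ l2)

/-- `Z` is obtained from the list `l` of graphs by iterated tree amalgamations of finite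
adhesion and finite identification with quasi-transitive actions on the factors and their
adhesion sets. -/
inductive GoodIterAmalg : BGraph.{u} → List BGraph.{u} → Prop
  | single (X : BGraph) : GoodIterAmalg X [X]
  | step {X Y Z : BGraph} {l1 l2 : List BGraph} :
      GoodIterAmalg X l1 → GoodIterAmalg Y l2 → GoodAmalgStep X Y Z →
        GoodIterAmalg Z (l1 ++ l2)

/-- `l` is a factorisation of the graph `Gb`. -/
def IsFactorisation (Gb : BGraph.{u}) (l : List BGraph.{u}) : Prop :=
  (∀ X ∈ l, X.G.Connected ∧ LocallyFiniteGraph X.G ∧ QuasiTransitive X.G) ∧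
    GoodIterAmalg Gb l

/-- A factorisation is terminal if every factor has at most one end. -/
def IsTerminal (l : List BGraph.{u}) : Prop := ∀ X ∈ l, Subsingleton X.G.end

/-!
Root the tree at a copy of `G1`. Every other copy of `G1` hangs, via its parent copy of the finite
graph `G2`, from an adhesion set of its grandparent copy. Choose a vertex, a *port*, of each
adhesion set. Up to bounded distance, `G` is then a hierarchy of copies of `G1` in which each port
of a copy, except the port by which the copy itself hangs, carries at least one further copy, and
boundedly many of them because `G` is locally finite and quasi-transitive. A tree amalgamation of
copies of `G1` along single vertices is a hierarchy with exactly one copy at each port, so the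
superfluous copies have to be moved.

By quasi-transitivity the ports are cobounded in the infinite graph `G1`, so each copy has as many
of them as we like within bounded distance of the port by which it hangs. Moving each superfluous
copy to such a port of a sibling attached near by is an injective map from copies to ports.
Conversely, one copy chosen at each port gives an injective map from ports to copies, and Cantor,
Schröder and Bernstein combine the two into a bijection under which every copy is either kept in
place or moved by a bounded distance.
-/

/-! ### Distances, balls and quasi-isometries -/

section Metric

variable {V : Type u} {W : Type v} {G : SimpleGraph V} {H : SimpleGraph W}

theorem dist_map_le_mul (hG : G.Connected) (hH : H.Connected) {f : V → W} {L : ℕ}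
    (hf : ∀ u v, G.Adj u v → H.dist (f u) (f v) ≤ L) (u v : V) :
    H.dist (f u) (f v) ≤ L * G.dist u v := by
  obtain ⟨p, hp⟩ := hG.exists_walk_length_eq_dist u v
  rw [← hp]
  clear hp
  induction p with
  | nil => simp
  | @cons a b c h p ih =>
    calc H.dist (f a) (f c) ≤ H.dist (f a) (f b) + H.dist (f b) (f c) := hH.dist_triangle
      _ ≤ L + L * p.length := add_le_add (hf _ _ h) ih
      _ = L * (Walk.cons h p).length := by rw [Walk.length_cons]; ring

theorem edist_map_le {f : V → W} (hf : ∀ u v, G.Adj u v → H.edist (f u) (f v) ≤ 1) (u v : V) :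
    H.edist (f u) (f v) ≤ G.edist u v := by
  by_cases huv : G.Reachable u v
  swap
  · exact (edist_eq_top_of_not_reachable huv).symm ▸ le_top
  obtain ⟨p, hp⟩ := huv.exists_walk_length_eq_edist
  rw [← hp]
  clear hp huv
  induction p with
  | nil => simp
  | @cons a b c h p ih =>
    calc H.edist (f a) (f c)
      _ ≤ H.edist (f a) (f b) + H.edist (f b) (f c) := SimpleGraph.edist_triangle
      _ ≤ 1 + p.length := add_le_add (hf _ _ h) ih
      _ = (Walk.cons h p).length := by rw [Walk.length_cons, Nat.cast_add, add_comm, Nat.cast_one]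

theorem dist_le_dist_of_edist_le (hG : G.Connected) {u v : V} {x y : W}
    (h : H.edist x y ≤ G.edist u v) : H.dist x y ≤ G.dist u v :=
  ENat.toNat_le_toNat h (edist_ne_top_iff_reachable.2 (hG u v))

theorem quasiIsometric_of_surjections {P : Type*} (hG : G.Connected) (hH : H.Connected)
    {α : P → V} {β : P → W} (hα : α.Surjective) (hβ : β.Surjective) {L : ℕ}
    (hαβ : ∀ p q, G.dist (α p) (α q) ≤ 1 → H.dist (β p) (β q) ≤ L)
    (hβα : ∀ p q, H.dist (β p) (β q) ≤ 1 → G.dist (α p) (α q) ≤ L) :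
    QuasiIsometric G H := by
  obtain ⟨s, hs⟩ := hα.hasRightInverse
  obtain ⟨t, ht⟩ := hβ.hasRightInverse
  have hf : ∀ u v, H.dist (β (s u)) (β (s v)) ≤ L * G.dist u v :=
    dist_map_le_mul (f := β ∘ s) hG hH fun u v h ↦ hαβ _ _ (by rw [hs, hs, dist_eq_one_iff_adj.2 h])
  have hg : ∀ u v, G.dist (α (t u)) (α (t v)) ≤ L * H.dist u v :=
    dist_map_le_mul (f := α ∘ t) hH hG fun u v h ↦ hβα _ _ (by rw [ht, ht, dist_eq_one_iff_adj.2 h])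
  have hgf : ∀ u, G.dist (α (t (β (s u)))) u ≤ L := fun u ↦ by
    simpa only [hs u] using hβα (t (β (s u))) (s u) (by rw [ht, dist_self]; exact zero_le_one)
  have hfg : ∀ w, H.dist w (β (s (α (t w)))) ≤ L := fun w ↦ by
    simpa only [ht w] using hαβ (t w) (s (α (t w))) (by rw [hs, dist_self]; exact zero_le_one)
  have hlower : ∀ u v, G.dist u v ≤ L * H.dist (β (s u)) (β (s v)) + 2 * L := fun u v ↦ by
    have hu : G.dist u (α (t (β (s u)))) ≤ L := dist_comm.trans_le (hgf u)
    have h₁ := hG.dist_triangle (u := u) (v := α (t (β (s u)))) (w := v)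
    have h₂ := hG.dist_triangle (u := α (t (β (s u)))) (v := α (t (β (s v)))) (w := v)
    linarith [hg (β (s u)) (β (s v)), hgf v]
  refine ⟨L + 1, 2 * L, β ∘ s, by simp, by positivity, fun u v ↦ ⟨?_, ?_⟩, fun w ↦ ⟨α (t w), ?_⟩⟩
  · rw [sub_le_iff_le_add, inv_mul_le_iff₀ (by positivity)]
    have : (G.dist u v : ℝ) ≤ L * H.dist (β (s u)) (β (s v)) + 2 * L := mod_cast hlower u v
    have : (0 : ℝ) ≤ L * (2 * L) := by positivity
    have : (0 : ℝ) ≤ H.dist (β (s u)) (β (s v)) := by positivity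
    simp only [Function.comp_apply]
    linarith
  · have : (H.dist (β (s u)) (β (s v)) : ℝ) ≤ L * G.dist u v := mod_cast hf u v
    have : (0 : ℝ) ≤ G.dist u v := by positivity
    simp only [Function.comp_apply]
    linarith [(Nat.cast_nonneg L : (0 : ℝ) ≤ L)]
  · have : (H.dist w (β (s (α (t w)))) : ℝ) ≤ L := mod_cast hfg w
    simp only [Function.comp_apply]
    linarith [(Nat.cast_nonneg L : (0 : ℝ) ≤ L)]

theorem dist_iso_apply (hG : G.Connected) (e : G ≃g H) (u v : V) :
    H.dist (e u) (e v) = G.dist u v := by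
  have hH := e.connected_iff.1 hG
  apply le_antisymm
  · simpa using dist_map_le_mul (L := 1) hG hH
      (fun u v h ↦ (dist_eq_one_iff_adj.2 (e.map_adj_iff.2 h)).le) u v
  · simpa using dist_map_le_mul (L := 1) hH hG
      (fun u v h ↦ (dist_eq_one_iff_adj.2 (e.symm.map_adj_iff.2 h)).le) (e u) (e v)

theorem QuasiIsometric.of_iso {V' : Type u} {G' : SimpleGraph V'} (hG : G.Connected)
    (e : G ≃g G') (h : QuasiIsometric G' H) : QuasiIsometric G H := by
  obtain ⟨γ, c, f, hγ, hc, hf, hsurj⟩ := h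
  refine ⟨γ, c, f ∘ e, hγ, hc, fun u v ↦ ?_, fun w ↦ ?_⟩
  · simpa only [Function.comp_apply, dist_iso_apply hG e] using hf (e u) (e v)
  · obtain ⟨x, hx⟩ := hsurj w
    exact ⟨e.symm x, by simpa using hx⟩

theorem LocallyFiniteGraph.of_iso (e : G ≃g H) (h : LocallyFiniteGraph G) :
    LocallyFiniteGraph H := fun w ↦
  ((h (e.symm w)).image e).subset fun x hx ↦ ⟨e.symm x, e.symm.map_adj_iff.2 hx, by simp⟩

theorem QuasiTransitive.of_iso (e : G ≃g H) (h : QuasiTransitive G) : QuasiTransitive H := by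
  obtain ⟨s, hs, h⟩ := h
  refine ⟨e '' s, hs.image _, fun w ↦ ?_⟩
  obtain ⟨u, hu, g, hg⟩ := h (e.symm w)
  exact ⟨e u, ⟨u, hu, rfl⟩, (e.symm.trans g).trans e, by simp [hg]⟩

theorem exists_adj_of_dist_eq_succ (hG : G.Connected) {u v : V} {r : ℕ}
    (h : G.dist u v = r + 1) : ∃ w, G.dist u w = r ∧ G.Adj w v := by
  obtain ⟨p, hp⟩ := hG.exists_walk_length_eq_dist v u
  cases p with
  | nil => simp at h
  | @cons _ b _ hadj p =>
    refine ⟨b, ?_, hadj.symm⟩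
    have hub := G.dist_le p
    have htri := hG.dist_triangle (u := v) (v := b) (w := u)
    rw [dist_eq_one_iff_adj.2 hadj] at htri
    rw [Walk.length_cons, dist_comm, h] at hp
    rw [dist_comm, h] at htri
    rw [dist_comm]
    omega

/-- The ball of radius `r` around `u`. Unlike `SimpleGraph.ball` it is closed. -/
def closedBall (G : SimpleGraph V) (u : V) (r : ℕ) : Set V := {v | G.dist u v ≤ r}

theorem closedBall_zero (hG : G.Connected) (u : V) : closedBall G u 0 = {u} :=
  Set.ext fun _ ↦ Nat.le_zero.trans (hG.dist_eq_zero_iff.trans eq_comm)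

theorem finite_closedBall (hG : G.Connected) (hlf : LocallyFiniteGraph G) (u : V) (r : ℕ) :
    (closedBall G u r).Finite := by
  induction r with
  | zero => exact closedBall_zero hG u ▸ Set.finite_singleton u
  | succ r ih =>
    refine (ih.union (ih.biUnion fun v _ ↦ hlf v)).subset fun v hv ↦ ?_
    rcases Nat.le_or_eq_of_le_succ hv with h | h
    · exact .inl h
    · obtain ⟨w, hw, hadj⟩ := exists_adj_of_dist_eq_succ hG h
      exact .inr (Set.mem_biUnion (show w ∈ closedBall G u r from hw.le) hadj)

theorem ncard_closedBall_iso_apply (hG : G.Connected) (e : G ≃g H) (u : V) (r : ℕ) :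
    (closedBall H (e u) r).ncard = (closedBall G u r).ncard := by
  have himage : e '' closedBall G u r = closedBall H (e u) r := by
    refine Set.Subset.antisymm ?_ fun w hw ↦ ⟨e.symm w, ?_, e.apply_symm_apply w⟩
    · rintro _ ⟨v, hv, rfl⟩
      exact (dist_iso_apply hG e u v).trans_le hv
    · exact (dist_iso_apply hG e u _).symm.trans_le (by rwa [e.apply_symm_apply])
  rw [← himage, Set.ncard_image_of_injective _ e.injective]

theorem QuasiTransitive.finite_range_ncard_closedBall (hG : G.Connected)
    (hqt : QuasiTransitive G) : (Set.range fun u r ↦ (closedBall G u r).ncard).Finite := by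
  obtain ⟨s, hs, horbit⟩ := hqt
  refine (hs.image fun u r ↦ (closedBall G u r).ncard).subset ?_
  rintro _ ⟨v, rfl⟩
  obtain ⟨u, hu, g, rfl⟩ := horbit v
  exact ⟨u, hu, funext fun r ↦ (ncard_closedBall_iso_apply hG g u r).symm⟩

theorem QuasiTransitive.exists_ncard_closedBall_le (hG : G.Connected) (hqt : QuasiTransitive G)
    (r : ℕ) : ∃ B, ∀ u, (closedBall G u r).ncard ≤ B := by
  obtain ⟨B, hB⟩ :=
    ((hqt.finite_range_ncard_closedBall hG).image fun profile ↦ profile r).bddAbove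
  exact ⟨B, fun u ↦ hB ⟨_, ⟨u, rfl⟩, rfl⟩⟩

theorem exists_vertex_dist_eq [Infinite V] (hG : G.Connected) (hlf : LocallyFiniteGraph G)
    (u : V) (r : ℕ) : ∃ v, G.dist u v = r := by
  obtain ⟨v, hv⟩ : ∃ v, r ≤ G.dist u v := by
    by_contra! hlt
    exact Set.infinite_univ ((finite_closedBall hG hlf u r).subset fun v _ ↦ (hlt v).le)
  obtain ⟨k, hk⟩ := Nat.exists_eq_add_of_le hv
  clear hv
  induction k generalizing v with
  | zero => exact ⟨v, hk⟩
  | succ k ih =>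
    obtain ⟨w, hw, -⟩ := exists_adj_of_dist_eq_succ hG (r := r + k) hk
    exact ih w hw

theorem exists_injective_seq_of_cobounded [Infinite V] (hG : G.Connected)
    (hlf : LocallyFiniteGraph G) {Z : Set V} {R : ℕ} (hZ : ∀ v, ∃ z ∈ Z, G.dist v z ≤ R) (w : Z) :
    ∃ t : ℕ → Z, t.Injective ∧ t 0 = w ∧ ∀ i, G.dist (w : V) (t i) ≤ i * (2 * R + 1) + R := by
  have hnear (i : ℕ) : ∃ z : Z, (i = 0 → z = w) ∧ G.dist (w : V) z ≤ i * (2 * R + 1) + R ∧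
      i * (2 * R + 1) ≤ G.dist (w : V) z + R := by
    obtain rfl | hi := eq_or_ne i 0
    · exact ⟨w, by simp⟩
    obtain ⟨v, hv⟩ := exists_vertex_dist_eq hG hlf (w : V) (i * (2 * R + 1))
    obtain ⟨z, hz, hvz⟩ := hZ v
    have hwz := hG.dist_triangle (u := (w : V)) (v := v) (w := z)
    have hwv := hG.dist_triangle (u := (w : V)) (v := z) (w := v)
    rw [dist_comm (u := z)] at hwv
    exact ⟨⟨z, hz⟩, fun h ↦ absurd h hi, by dsimp only; omega, by dsimp only; omega⟩
  choose t ht₀ hle hge using hnear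
  have hlt : ∀ i j, i < j → t i ≠ t j := fun i j hij heq ↦ by
    have := Nat.mul_le_mul_right (2 * R + 1) (Nat.succ_le_of_lt hij)
    rw [Nat.succ_mul] at this
    have := hle i
    rw [heq] at this
    linarith [hge j]
  refine ⟨t, fun i j heq ↦ ?_, ht₀ 0 rfl, hle⟩
  by_contra hne
  exact (lt_or_gt_of_ne hne).elim (hlt i j · heq) (hlt j i · heq.symm)

end Metric

/-! ### Rooted trees -/

section RootedTree

variable {X : Type*} {T : SimpleGraph X} {r : X}

theorem eq_of_adj_of_dist_eq_add_one (hT : T.IsTree) {v w w' : X} (h : T.Adj w v)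
    (h' : T.Adj w' v) (hd : T.dist r v = T.dist r w + 1) (hd' : T.dist r v = T.dist r w' + 1) :
    w = w' := by
  obtain ⟨p, hp⟩ := hT.connected.exists_walk_length_eq_dist r w
  obtain ⟨q, hq⟩ := hT.connected.exists_walk_length_eq_dist r w'
  have hpath : (p.concat h).IsPath :=
    Walk.isPath_of_length_eq_dist _ (by rw [Walk.length_concat, hp, hd])
  have hpath' : (q.concat h').IsPath :=
    Walk.isPath_of_length_eq_dist _ (by rw [Walk.length_concat, hq, hd'])
  have heq : p.concat h = q.concat h' :=
    congrArg Subtype.val <|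
      (hT.isAcyclic.subsingleton_path r v).elim ⟨_, hpath⟩ ⟨_, hpath'⟩
  simpa using congrArg Walk.penultimate heq

variable {parent : X → X} {rank : X → ℕ}

theorem connected_of_parent (hrank : ∀ c, c ≠ r → rank (parent c) < rank c)
    (hadj : ∀ c, c ≠ r → T.Adj c (parent c)) : T.Connected := by
  have hreach : ∀ n c, rank c = n → T.Reachable c r := fun n ↦ by
    induction n using Nat.strong_induction_on with
    | _ n ih =>
      rintro c rfl
      by_cases hc : c = r
      · exact hc ▸ .rfl
      · exact (hadj c hc).reachable.trans (ih _ (hrank c hc) _ rfl)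
  exact (connected_iff_exists_forall_reachable T).2 ⟨r, fun c ↦ (hreach _ c rfl).symm⟩

theorem isTree_of_parent (hrank : ∀ c, c ≠ r → rank (parent c) < rank c)
    (hadj : ∀ a b, T.Adj a b ↔ (b ≠ r ∧ parent b = a) ∨ (a ≠ r ∧ parent a = b)) : T.IsTree := by
  refine ⟨connected_of_parent hrank fun c hc ↦ (hadj _ _).2 (.inr ⟨hc, rfl⟩), fun v p hp ↦ ?_⟩
  classical
  obtain ⟨m, hm, hmax⟩ := p.support.toFinset.exists_max_image rank ⟨v, by simp⟩
  simp only [List.mem_toFinset] at hm hmax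
  -- Both cycle neighbours of a vertex of maximal rank would be its parent.
  set q := p.rotate m hm
  have hq : q.IsCycle := hp.rotate hm
  have hparent : ∀ w ∈ q.support, T.Adj m w → w = parent m := fun w hw hmw ↦ by
    rcases (hadj m w).1 hmw with ⟨hw', rfl⟩ | ⟨-, rfl⟩
    · exact absurd (hrank w hw') (hmax w ((p.mem_support_rotate_iff ..).1 hw)).not_gt
    · rfl
  refine hq.snd_ne_penultimate ((hparent _ ?_ (q.adj_snd hq.not_nil)).trans
    (hparent _ ?_ (q.adj_penultimate hq.not_nil).symm).symm)
  · exact q.getVert_mem_support _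
  · exact q.getVert_mem_support _

end RootedTree

/-! ### Tree amalgamations -/

namespace TreeAmalgData

variable {V1 V2 : Type u} {G1 : SimpleGraph V1} {G2 : SimpleGraph V2} (D : TreeAmalgData G1 G2)

theorem exists_of_plusGraph_adj {p q : D.PlusV} (h : D.plusGraph.Adj p q) :
    (∃ a x y, p = .inl (a, x) ∧ q = .inl (a, y) ∧ G1.Adj x y) ∨
      (∃ b x y, p = .inr (b, x) ∧ q = .inr (b, y) ∧ G2.Adj x y) ∨
      D.idRel p q ∨ D.idRel q p := by
  obtain ⟨-, h⟩ := (fromRel_adj ..).1 h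
  obtain ⟨a, x⟩ | ⟨b, x⟩ := p <;> obtain ⟨a', y⟩ | ⟨b', y⟩ := q
  · obtain ⟨ha, hxy⟩ : a = a' ∧ G1.Adj x y := h.elim id fun h ↦ ⟨h.1.symm, h.2.symm⟩
    exact .inl ⟨a, x, y, rfl, ha ▸ rfl, hxy⟩
  · exact .inr (.inr (.inl ⟨_, _, rfl, rfl, h.resolve_right id⟩))
  · exact .inr (.inr (.inr ⟨_, _, rfl, rfl, h.resolve_left id⟩))
  · obtain ⟨hb, hxy⟩ : b = b' ∧ G2.Adj x y := h.elim id fun h ↦ ⟨h.1.symm, h.2.symm⟩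
    exact .inr (.inl ⟨b, x, y, rfl, hb ▸ rfl, hxy⟩)

theorem exists_of_amalgGraph_adj {u v : D.AmalgV} (h : D.amalgGraph.Adj u v) :
    (∃ a x y, u = D.toAmalg (.inl (a, x)) ∧ v = D.toAmalg (.inl (a, y)) ∧ G1.Adj x y) ∨
      ∃ b x y, u = D.toAmalg (.inr (b, x)) ∧ v = D.toAmalg (.inr (b, y)) ∧ G2.Adj x y := by
  obtain ⟨hne, h⟩ := (fromRel_adj ..).1 h
  obtain ⟨p, q, rfl, rfl, hpq⟩ :
      ∃ p q, u = D.toAmalg p ∧ v = D.toAmalg q ∧ D.plusGraph.Adj p q :=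
    h.elim id fun ⟨q, p, hv, hu, hqp⟩ ↦ ⟨p, q, hu, hv, hqp.symm⟩
  rcases D.exists_of_plusGraph_adj hpq with
    ⟨a, x, y, rfl, rfl, hxy⟩ | ⟨b, x, y, rfl, rfl, hxy⟩ | hid | hid
  · exact .inl ⟨a, x, y, rfl, rfl, hxy⟩
  · exact .inr ⟨b, x, y, rfl, rfl, hxy⟩
  · exact absurd (Quot.sound hid) hne
  · exact absurd (Quot.sound hid).symm hne

theorem edist_toAmalg_le_one {p q : D.PlusV} (h : D.plusGraph.Adj p q) :
    D.amalgGraph.edist (D.toAmalg p) (D.toAmalg q) ≤ 1 := by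
  rw [edist_le_one_iff_adj_or_eq]
  by_cases heq : D.toAmalg p = D.toAmalg q
  · exact .inr heq
  · exact .inl ((fromRel_adj ..).2 ⟨heq, .inl ⟨p, q, rfl, rfl, h⟩⟩)

theorem edist_toAmalg_inl_le (a : D.VT1) (x y : V1) :
    D.amalgGraph.edist (D.toAmalg (.inl (a, x))) (D.toAmalg (.inl (a, y))) ≤ G1.edist x y :=
  edist_map_le (f := fun x ↦ D.toAmalg (.inl (a, x))) (fun x y h ↦ D.edist_toAmalg_le_one <|
    (fromRel_adj ..).2 ⟨by rintro ⟨⟩; exact h.ne rfl, .inl ⟨rfl, h⟩⟩) x y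

theorem edist_toAmalg_inr_le (b : D.VT2) (x y : V2) :
    D.amalgGraph.edist (D.toAmalg (.inr (b, x))) (D.toAmalg (.inr (b, y))) ≤ G2.edist x y :=
  edist_map_le (f := fun x ↦ D.toAmalg (.inr (b, x))) (fun x y h ↦ D.edist_toAmalg_le_one <|
    (fromRel_adj ..).2 ⟨by rintro ⟨⟩; exact h.ne rfl, .inl ⟨rfl, h⟩⟩) x y

end TreeAmalgData

/-! ### Amalgamating copies of one graph along single vertices -/

/-- A tree each of whose edges `ab` carries a port `label a b` at its end `a`, the edges at a
given vertex using each port in `Z` exactly once. It is the gluing pattern of a tree amalgamation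
of copies of a graph along single vertices from `Z`. -/
structure PortTree (X : Type u) {V : Type u} (Z : Set V) where
  graph : SimpleGraph X
  isTree : graph.IsTree
  root : X
  label : X → X → Z
  bijOn_label : ∀ a, Set.BijOn (label a) (graph.neighborSet a) Set.univ

namespace PortTree

variable {X V : Type u} {Z : Set V} (P : PortTree X Z) (G : SimpleGraph V)

/-- The class `VT1` of the bipartition of the tree: the vertices at even distance from the
root. -/
abbrev IsEven (a : X) : Prop := Even (P.graph.dist P.root a)

theorem isEven_iff_not_isEven {a b : X} (h : P.graph.Adj a b) : P.IsEven a ↔ ¬ P.IsEven b := by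
  rw [← Nat.even_add_one]
  rcases P.isTree.dist_eq_dist_add_one_of_adj P.root h with hd | hd
  · rw [IsEven, hd]
  · rw [IsEven, hd, Nat.even_add_one, Nat.even_add_one, not_not]

open Classical in
theorem nonempty_bipGraph_iso :
    Nonempty (bipGraph (fun (a : {a // P.IsEven a}) (b : {b // ¬ P.IsEven b}) ↦
      P.graph.Adj a b) ≃g P.graph) := by
  refine ⟨Equiv.sumCompl P.IsEven, ?_⟩
  rintro (a | a) (b | b)
  · have : ¬ P.graph.Adj a b := fun h ↦ (P.isEven_iff_not_isEven h).1 a.2 b.2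
    simpa [bipGraph]
  · simp [bipGraph]
  · simp [bipGraph, P.graph.adj_comm]
  · have : ¬ P.graph.Adj a b := fun h ↦ a.2 ((P.isEven_iff_not_isEven h).2 b.2)
    simpa [bipGraph]

/-- The tree amalgamation of copies of `G`, one for each vertex of the tree `P`, which glues
the port `label a b` of the copy at `a` to the port `label b a` of the copy at `b` whenever `a`
and `b` are adjacent. -/
def amalgam : TreeAmalgData G G where
  VT1 := {a // P.IsEven a}
  VT2 := {a // ¬ P.IsEven a}
  K1 := Z
  K2 := Z
  Tadj a b := P.graph.Adj a b
  isTree := P.nonempty_bipGraph_iso.elim fun e ↦ e.isTree_iff.2 P.isTree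
  lab1 a b _ := P.label a b
  lab2 a b _ := P.label b a
  lab1_bij a := by
    refine ⟨fun b b' h ↦ Subtype.ext (Subtype.ext ((P.bijOn_label a).injOn b.2 b'.2 h)),
      fun z ↦ ?_⟩
    obtain ⟨b, hb, hz⟩ := (P.bijOn_label a).surjOn (Set.mem_univ z)
    exact ⟨⟨⟨b, (P.isEven_iff_not_isEven hb).1 a.2⟩, hb⟩, hz⟩
  lab2_bij b := by
    refine ⟨fun a a' h ↦ Subtype.ext (Subtype.ext ((P.bijOn_label b).injOn a.2.symm a'.2.symm h)),
      fun z ↦ ?_⟩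
    obtain ⟨a, ha, hz⟩ := (P.bijOn_label b).surjOn (Set.mem_univ z)
    exact ⟨⟨⟨a, (P.isEven_iff_not_isEven ha.symm).2 b.2⟩, ha.symm⟩, hz⟩
  S1 z := {(z : V)}
  S2 z := {(z : V)}
  S1_nonempty _ := Set.singleton_nonempty _
  glue _ z _ := z
  glue_bij _ _ := Set.bijOn_singleton.2 rfl

/-- The tree vertex `a` and the vertex `x` of `G` such that the given vertex of the disjoint
union of the copies of `G` is the vertex `x` of the copy at `a`. -/
def location : (P.amalgam G).PlusV → X × V
  | .inl (a, x) => (a.1, x)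
  | .inr (a, x) => (a.1, x)

open Classical in
/-- The vertex of the amalgamation that represents the vertex `x` of the copy of `G` at `a`. -/
noncomputable def copy (a : X) (x : V) : (P.amalgam G).AmalgV :=
  (P.amalgam G).toAmalg (if h : P.IsEven a then .inl (⟨a, h⟩, x) else .inr (⟨a, h⟩, x))

/-- `P.Glues (a, x) (b, y)` means that the vertex `x` of the copy at `a` is glued to the vertex
`y` of the copy at `b`. -/
def Glues (p q : X × V) : Prop :=
  P.graph.Adj p.1 q.1 ∧ p.2 = P.label p.1 q.1 ∧ q.2 = P.label q.1 p.1

variable {P G}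

theorem Glues.symm {p q : X × V} (h : P.Glues p q) : P.Glues q p :=
  ⟨h.1.symm, h.2.2, h.2.1⟩

theorem Glues.right_unique {p q q' : X × V} (h : P.Glues p q) (h' : P.Glues p q') : q = q' := by
  obtain ⟨b, y⟩ := q
  obtain ⟨b', y'⟩ := q'
  obtain rfl : b = b' :=
    (P.bijOn_label p.1).injOn h.1 h'.1 (Subtype.ext (h.2.1.symm.trans h'.2.1))
  rw [show y = y' from h.2.2.trans h'.2.2.symm]

theorem glues_location_of_idRel {p q : (P.amalgam G).PlusV} (h : (P.amalgam G).idRel p q) :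
    P.Glues (P.location G p) (P.location G q) := by
  obtain ⟨p, q, rfl, rfl, hadj, hp, hq⟩ := h
  exact ⟨hadj, hp, hq⟩

theorem copy_of_isEven {a : X} (ha : P.IsEven a) (x : V) :
    P.copy G a x = (P.amalgam G).toAmalg (.inl (⟨a, ha⟩, x)) := by
  rw [copy, dif_pos ha]

theorem copy_of_not_isEven {a : X} (ha : ¬ P.IsEven a) (x : V) :
    P.copy G a x = (P.amalgam G).toAmalg (.inr (⟨a, ha⟩, x)) := by
  rw [copy, dif_neg ha]

theorem toAmalg_eq_copy (p : (P.amalgam G).PlusV) :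
    (P.amalgam G).toAmalg p = P.copy G (P.location G p).1 (P.location G p).2 := by
  obtain ⟨⟨a, ha⟩, x⟩ | ⟨⟨a, ha⟩, x⟩ := p
  · exact (copy_of_isEven ha x).symm
  · exact (copy_of_not_isEven ha x).symm

theorem exists_copy_eq_toAmalg (a : X) (x : V) :
    ∃ p, P.copy G a x = (P.amalgam G).toAmalg p ∧ P.location G p = (a, x) := by
  by_cases ha : P.IsEven a
  · exact ⟨_, copy_of_isEven ha x, rfl⟩
  · exact ⟨_, copy_of_not_isEven ha x, rfl⟩

theorem copy_eq_copy_of_glues {a b : X} {x y : V} (h : P.Glues (a, x) (b, y)) :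
    P.copy G a x = P.copy G b y := by
  wlog ha : P.IsEven a generalizing a b x y
  · exact (this h.symm (not_not.1 fun hb ↦ ha ((P.isEven_iff_not_isEven h.1).2 hb))).symm
  have hb := (P.isEven_iff_not_isEven h.1).1 ha
  rw [copy_of_isEven ha, copy_of_not_isEven hb]
  exact Quot.sound ⟨(⟨a, ha⟩, x), (⟨b, hb⟩, y), rfl, rfl, h.1, h.2.1, h.2.2⟩

theorem eq_or_glues_of_copy_eq_copy {a b : X} {x y : V} (h : P.copy G a x = P.copy G b y) :
    (a, x) = (b, y) ∨ P.Glues (a, x) (b, y) := by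
  let Meets (q : X × V) : Prop := (a, x) = q ∨ P.Glues (a, x) q
  have hstep : ∀ q q', P.Glues q q' → Meets q → Meets q' := by
    rintro q q' hq (rfl | h)
    · exact .inr hq
    · exact .inl (h.symm.right_unique hq)
  let meets : (P.amalgam G).AmalgV → Prop := Quot.lift (fun p ↦ Meets (P.location G p)) fun p q h ↦
    have hg := glues_location_of_idRel h
    propext ⟨hstep _ _ hg, hstep _ _ hg.symm⟩
  obtain ⟨p, hp, hpa⟩ := exists_copy_eq_toAmalg (P := P) (G := G) a x
  obtain ⟨q, hq, hqb⟩ := exists_copy_eq_toAmalg (P := P) (G := G) b y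
  have hmeets : meets ((P.amalgam G).toAmalg p) := .inl hpa.symm
  rw [← hp, h, hq] at hmeets
  exact hqb ▸ hmeets

theorem exists_eq_copy (u : (P.amalgam G).AmalgV) : ∃ a x, u = P.copy G a x := by
  obtain ⟨p, rfl⟩ := Quot.exists_rep u
  exact ⟨_, _, toAmalg_eq_copy p⟩

theorem exists_eq_copy_of_adj {u v : (P.amalgam G).AmalgV}
    (h : (P.amalgam G).amalgGraph.Adj u v) :
    ∃ a x y, u = P.copy G a x ∧ v = P.copy G a y ∧ G.Adj x y := by
  rcases (P.amalgam G).exists_of_amalgGraph_adj h with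
    ⟨a, x, y, rfl, rfl, hxy⟩ | ⟨a, x, y, rfl, rfl, hxy⟩
  all_goals exact ⟨a.1, x, y, toAmalg_eq_copy _, toAmalg_eq_copy _, hxy⟩

theorem edist_copy_le (a : X) (x y : V) :
    (P.amalgam G).amalgGraph.edist (P.copy G a x) (P.copy G a y) ≤ G.edist x y := by
  by_cases ha : P.IsEven a
  · simpa only [copy_of_isEven ha] using (P.amalgam G).edist_toAmalg_inl_le ⟨a, ha⟩ x y
  · simpa only [copy_of_not_isEven ha] using (P.amalgam G).edist_toAmalg_inr_le ⟨a, ha⟩ x y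

theorem dist_copy_le (hG : G.Connected) (a : X) (x y : V) :
    (P.amalgam G).amalgGraph.dist (P.copy G a x) (P.copy G a y) ≤ G.dist x y :=
  dist_le_dist_of_edist_le hG (edist_copy_le a x y)

theorem connected_amalgGraph (hG : G.Connected) : (P.amalgam G).amalgGraph.Connected := by
  have hcopy : ∀ a x y, (P.amalgam G).amalgGraph.Reachable (P.copy G a x) (P.copy G a y) :=
    fun a x y ↦ edist_ne_top_iff_reachable.1 <|
      ne_top_of_le_ne_top (edist_ne_top_iff_reachable.2 (hG x y)) (edist_copy_le a x y)
  have htree : ∀ {a b}, P.graph.Reachable a b → ∀ x y,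
      (P.amalgam G).amalgGraph.Reachable (P.copy G a x) (P.copy G b y) := by
    rintro a b ⟨w⟩
    induction w with
    | nil => exact hcopy _
    | @cons a b c hab _ ih =>
      intro x y
      have hglue : P.copy G a (P.label a b) = P.copy G b (P.label b a) :=
        copy_eq_copy_of_glues ⟨hab, rfl, rfl⟩
      exact (hcopy a x _).trans (hglue ▸ ih _ y)
  refine (connected_iff _).2 ⟨fun u v ↦ ?_, ⟨P.copy G P.root hG.nonempty.some⟩⟩
  obtain ⟨a, x, rfl⟩ := exists_eq_copy u
  obtain ⟨b, y, rfl⟩ := exists_eq_copy v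
  exact htree (P.isTree.connected a b) x y

theorem not_isTrivial_amalgam [Nontrivial V] [Nonempty Z] : ¬ (P.amalgam G).IsTrivial := by
  have hnot : ∀ a, ¬ Function.Surjective (P.copy G a) := fun a hsurj ↦ by
    obtain ⟨b, hab, -⟩ := (P.bijOn_label a).surjOn (Set.mem_univ (Classical.arbitrary Z))
    obtain ⟨y, hy⟩ := exists_ne (P.label b a : V)
    obtain ⟨x, hx⟩ := hsurj (P.copy G b y)
    rcases eq_or_glues_of_copy_eq_copy hx with h | h
    · exact hab.ne (Prod.mk.inj h).1
    · exact hy h.2.2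
  rintro (⟨a, ha⟩ | ⟨a, ha⟩)
  all_goals
    exact hnot a.1 fun u ↦ (ha.2 u).imp fun x hx ↦ (toAmalg_eq_copy _).symm.trans hx

end PortTree

/-! ### Hierarchies of copies -/

/-- A pattern in which copies of a graph, indexed by `X`, are attached below each other: the copy
`c ≠ root` is attached by its port `entry c` to the port `slot c` of the copy `parent c`. Except
for `entry a` in a copy `a ≠ root`, every port has at least one copy attached to it. -/
structure Hierarchy {X Z : Type*} (root : X) (entry : X → Z) where
  parent : X → X
  slot : X → Z
  depth : X → ℕ
  depth_parent_lt : ∀ c, c ≠ root → depth (parent c) < depth c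
  exists_child : ∀ a z, a = root ∨ z ≠ entry a → ∃ c, c ≠ root ∧ parent c = a ∧ slot c = z

namespace Hierarchy

section Tree

variable {X Z : Type*} {root : X} {entry : X → Z} (H : Hierarchy root entry)

/-- In a regular hierarchy exactly one copy is attached to every port `z` of `a`, except that none
is attached to the port `entry a` of `a ≠ root`. -/
structure IsRegular : Prop where
  isPort : ∀ c, c ≠ root → H.parent c = root ∨ H.slot c ≠ entry (H.parent c)
  injOn : Set.InjOn (fun c ↦ (H.parent c, H.slot c)) {root}ᶜ

/-- The tree of a hierarchy. -/
def graph : SimpleGraph X := fromRel fun a b ↦ b ≠ root ∧ H.parent b = a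

theorem graph_adj {a b : X} :
    H.graph.Adj a b ↔ (b ≠ root ∧ H.parent b = a) ∨ (a ≠ root ∧ H.parent a = b) := by
  refine (fromRel_adj ..).trans (and_iff_right_of_imp ?_)
  rintro (⟨hb, rfl⟩ | ⟨ha, rfl⟩) heq
  · exact (H.depth_parent_lt b hb).ne (congrArg _ heq)
  · exact (H.depth_parent_lt a ha).ne (congrArg _ heq.symm)

theorem parent_parent_ne {c : X} (hc : c ≠ root) (hp : H.parent c ≠ root) :
    H.parent (H.parent c) ≠ c := fun h ↦
  ((H.depth_parent_lt _ hp).trans (H.depth_parent_lt c hc)).ne (congrArg _ h)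

open Classical in
/-- The port of `a` at which the edge from `a` to `b` of the tree of the hierarchy leaves. -/
noncomputable def label (a b : X) : Z := if b ≠ root ∧ H.parent b = a then H.slot b else entry a

theorem label_parent_self {c : X} (hc : c ≠ root) : H.label (H.parent c) c = H.slot c :=
  if_pos ⟨hc, rfl⟩

theorem label_self_parent {c : X} (hc : c ≠ root) : H.label c (H.parent c) = entry c :=
  if_neg fun h ↦ H.parent_parent_ne hc h.1 h.2

variable {H} in
theorem IsRegular.bijOn_label (hH : H.IsRegular) (a : X) :
    Set.BijOn (H.label a) (H.graph.neighborSet a) Set.univ := by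
  refine ⟨fun _ _ ↦ trivial, fun b hb b' hb' heq ↦ ?_, fun z _ ↦ ?_⟩
  · rcases H.graph_adj.1 hb with ⟨hbr, rfl⟩ | ⟨har, rfl⟩ <;>
      rcases H.graph_adj.1 hb' with ⟨hbr', hbb'⟩ | ⟨har', rfl⟩
    · refine hH.injOn hbr hbr' (Prod.ext hbb'.symm ?_)
      rwa [← hbb', H.label_parent_self hbr', hbb', H.label_parent_self hbr] at heq
    · rw [H.label_parent_self hbr, H.label_self_parent har'] at heq
      exact absurd heq ((hH.isPort b hbr).resolve_left har')
    · subst hbb'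
      rw [H.label_parent_self hbr', H.label_self_parent har] at heq
      exact absurd heq.symm ((hH.isPort b' hbr').resolve_left har)
    · rfl
  · by_cases hz : a = root ∨ z ≠ entry a
    · obtain ⟨c, hc, rfl, rfl⟩ := H.exists_child a z hz
      exact ⟨c, H.graph_adj.2 (.inl ⟨hc, rfl⟩), H.label_parent_self hc⟩
    · rw [not_or, not_not] at hz
      exact ⟨H.parent a, H.graph_adj.2 (.inr ⟨hz.1, rfl⟩),
        (H.label_self_parent hz.1).trans hz.2.symm⟩

end Tree

section Glues

variable {X V : Type u} {Z : Set V} {root : X} {entry : X → Z} {H : Hierarchy root entry}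

/-- The gluing pattern given by a regular hierarchy. -/
noncomputable def portTree (hH : H.IsRegular) : PortTree X Z where
  graph := H.graph
  isTree := isTree_of_parent H.depth_parent_lt fun _ _ ↦ H.graph_adj
  root := root
  label := H.label
  bijOn_label := hH.bijOn_label

theorem glues_portTree_iff (hH : H.IsRegular) {p q : X × V} :
    (H.portTree hH).Glues p q ↔
      (q.1 ≠ root ∧ p = (H.parent q.1, (H.slot q.1 : V)) ∧ q.2 = entry q.1) ∨
        (p.1 ≠ root ∧ q = (H.parent p.1, (H.slot p.1 : V)) ∧ p.2 = entry p.1) := by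
  obtain ⟨a, x⟩ := p
  obtain ⟨b, y⟩ := q
  constructor
  · rintro ⟨hab, hx, hy⟩
    dsimp only [portTree] at hab hx hy
    rcases H.graph_adj.1 hab with ⟨hb, rfl⟩ | ⟨ha, rfl⟩
    · rw [H.label_parent_self hb] at hx
      rw [H.label_self_parent hb] at hy
      exact .inl ⟨hb, Prod.ext rfl hx, hy⟩
    · rw [H.label_self_parent ha] at hx
      rw [H.label_parent_self ha] at hy
      exact .inr ⟨ha, Prod.ext rfl hy, hx⟩
  · rintro (⟨hb, h, hy⟩ | ⟨ha, h, hx⟩) <;> obtain ⟨rfl, rfl⟩ := Prod.mk.inj h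
    · exact ⟨H.graph_adj.2 (.inl ⟨hb, rfl⟩), congrArg Subtype.val (H.label_parent_self hb).symm,
        hy.trans (congrArg _ (H.label_self_parent hb).symm)⟩
    · exact ⟨H.graph_adj.2 (.inr ⟨ha, rfl⟩), hx.trans (congrArg _ (H.label_self_parent ha).symm),
        congrArg Subtype.val (H.label_parent_self ha).symm⟩

theorem copy_portTree_slot (hH : H.IsRegular) (G : SimpleGraph V) {c : X} (hc : c ≠ root) :
    (H.portTree hH).copy G (H.parent c) (H.slot c) = (H.portTree hH).copy G c (entry c) :=
  PortTree.copy_eq_copy_of_glues ((glues_portTree_iff hH).2 (.inl ⟨hc, rfl, rfl⟩))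

end Glues

section Regularization

variable {X Z : Type*} {root : X} {entry : X → Z} (H : Hierarchy root entry)

/-- The copies attached to the port `z` of the copy `a`. -/
def children (a : X) (z : Z) : Set X := {c | c ≠ root ∧ H.parent c = a ∧ H.slot c = z}

open Classical in
/-- A chosen copy attached to the port `z` of the copy `a`, meaningful only if there is one. -/
noncomputable def primary (a : X) (z : Z) : X :=
  if h : ∃ c, c ≠ root ∧ H.parent c = a ∧ H.slot c = z then h.choose else a

theorem primary_mem_children {a : X} {z : Z} (h : a = root ∨ z ≠ entry a) :
    H.primary a z ∈ H.children a z := by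
  have hex := H.exists_child a z h
  rw [primary, dif_pos hex]
  exact hex.choose_spec

theorem primary_injOn :
    Set.InjOn (fun p : X × Z ↦ H.primary p.1 p.2) {p | p.1 = root ∨ p.2 ≠ entry p.1} := by
  intro p hp q hq heq
  obtain ⟨-, hp₁, hp₂⟩ := H.primary_mem_children hp
  obtain ⟨-, hq₁, hq₂⟩ := H.primary_mem_children hq
  dsimp only at heq
  exact Prod.ext (by rw [← hp₁, heq, hq₁]) (by rw [← hp₂, heq, hq₂])

variable (t : X → ℕ → Z) (m : ℕ)

/-- The ports `t a 0, …, t a m` of the copy `a`, which are set aside for the copies that will be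
moved. -/
def Reserved (a : X) (z : Z) : Prop := ∃ i ≤ m, z = t a i

open Classical in
/-- Replaces the reserved port `t a i` of `a` by `t a (i + m + 1)` and fixes all other ports. -/
noncomputable def shift (a : X) (z : Z) : Z :=
  if h : Reserved t m a z then t a (h.choose + m + 1) else z

/-- The primary copy at the port of `parent c` obtained from `slot c` by moving it out of the
reserved range. The copies which are their own hosts keep their place, and all others are to be
attached to reserved ports of their hosts. -/
noncomputable def host (c : X) : X := H.primary (H.parent c) (shift t m (H.parent c) (H.slot c))

/-- The copies that are to be attached to the copy `P`. -/
def guests (P : X) : Set X := {c | c ≠ root ∧ H.host t m c = P ∧ c ≠ P}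

open Classical in
/-- The place of `c` after its move: the copy and the port it is to be attached to, where `J`
numbers the guests of each copy. -/
noncomputable def place (J : X → ℕ) (c : X) : X × Z :=
  if H.host t m c = c then (H.parent c, H.slot c) else (H.host t m c, t (H.host t m c) (J c))

variable {t m}

theorem shift_of_not_reserved {a : X} {z : Z} (h : ¬ Reserved t m a z) : shift t m a z = z :=
  dif_neg h

theorem Reserved.exists_shift_eq {a : X} {z : Z} (h : Reserved t m a z) :
    ∃ i ≤ m, z = t a i ∧ shift t m a z = t a (i + m + 1) :=
  ⟨h.choose, h.choose_spec.1, h.choose_spec.2, dif_pos h⟩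

theorem ne_entry_of_not_reserved (ht₀ : ∀ a, t a 0 = entry a) {a : X} {z : Z}
    (h : ¬ Reserved t m a z) : z ≠ entry a :=
  fun hz ↦ h ⟨0, Nat.zero_le _, hz.trans (ht₀ a).symm⟩

theorem place_of_host_eq {J : X → ℕ} {c : X} (h : H.host t m c = c) :
    H.place t m J c = (H.parent c, H.slot c) := if_pos h

theorem place_of_host_ne {J : X → ℕ} {c : X} (h : H.host t m c ≠ c) :
    H.place t m J c = (H.host t m c, t (H.host t m c) (J c)) := if_neg h

variable (ht : ∀ a, (t a).Injective)
include ht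

theorem not_reserved_shift (a : X) (z : Z) : ¬ Reserved t m a (shift t m a z) := by
  by_cases h : Reserved t m a z
  · obtain ⟨i, -, -, hi⟩ := h.exists_shift_eq
    rintro ⟨j, hj, heq⟩
    have := ht a (hi.symm.trans heq)
    omega
  · rwa [shift_of_not_reserved h]

theorem exists_forall_shift_eq (a : X) (w : Z) :
    ∃ z, ∀ z', shift t m a z' = w → z' = w ∨ z' = z := by
  by_cases h : ∃ z, Reserved t m a z ∧ shift t m a z = w
  · obtain ⟨z, hz, rfl⟩ := h
    refine ⟨z, fun z' hz' ↦ ?_⟩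
    by_cases hr : Reserved t m a z'
    · obtain ⟨i, -, rfl, hi⟩ := hz.exists_shift_eq
      obtain ⟨j, -, rfl, hj⟩ := hr.exists_shift_eq
      rw [hi, hj] at hz'
      have := ht a hz'
      exact .inr (congrArg _ (by omega))
    · exact .inl ((shift_of_not_reserved hr).symm.trans hz')
  · refine ⟨w, fun z' hz' ↦ .inl ?_⟩
    exact (shift_of_not_reserved fun hr ↦ h ⟨z', hr, hz'⟩).symm.trans hz'

variable (ht₀ : ∀ a, t a 0 = entry a)
include ht₀

theorem host_mem_children (c : X) :
    H.host t m c ∈ H.children (H.parent c) (shift t m (H.parent c) (H.slot c)) :=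
  H.primary_mem_children (.inr (ne_entry_of_not_reserved ht₀ (not_reserved_shift ht _ _)))

theorem host_host (c : X) : H.host t m (H.host t m c) = H.host t m c := by
  obtain ⟨-, hp, hs⟩ := H.host_mem_children ht ht₀ (m := m) c
  rw [host, hp, hs, shift_of_not_reserved (not_reserved_shift ht _ _), host]

theorem not_reserved_of_host_eq {c : X} (h : H.host t m c = c) :
    ¬ Reserved t m (H.parent c) (H.slot c) := by
  have hs := (H.host_mem_children ht ht₀ (m := m) c).2.2
  rw [h] at hs
  rw [hs]
  exact not_reserved_shift ht _ _

theorem exists_guests_subset (P : X) :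
    ∃ z, H.guests t m P ⊆ H.children (H.parent P) (H.slot P) ∪ H.children (H.parent P) z := by
  obtain ⟨z, hz⟩ := exists_forall_shift_eq ht (m := m) (H.parent P) (H.slot P)
  refine ⟨z, ?_⟩
  rintro c ⟨hc, rfl, -⟩
  obtain ⟨-, hp, hs⟩ := H.host_mem_children ht ht₀ (m := m) c
  rw [hp] at hz ⊢
  exact (hz _ hs.symm).imp (fun h ↦ ⟨hc, rfl, h⟩) fun h ↦ ⟨hc, rfl, h⟩

theorem exists_injOn_guests {D : ℕ} (hfin : ∀ a z, (H.children a z).Finite)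
    (hcard : ∀ a z, (H.children a z).ncard ≤ D) :
    ∃ J : X → ℕ, ∀ P, Set.MapsTo J (H.guests t m P) (Set.Icc 1 (2 * D)) ∧
      Set.InjOn J (H.guests t m P) := by
  have hJ : ∀ P, ∃ J : X → ℕ, Set.MapsTo J (H.guests t m P) (Set.Icc 1 (2 * D)) ∧
      Set.InjOn J (H.guests t m P) := fun P ↦ by
    obtain ⟨z, hz⟩ := H.exists_guests_subset ht ht₀ (m := m) P
    have hu := (hfin (H.parent P) (H.slot P)).union (hfin (H.parent P) z)
    refine (hu.subset hz).exists_injOn_of_encard_le (t := Set.Icc 1 (2 * D)) ?_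
    rw [← (hu.subset hz).cast_ncard_eq, ← (Set.finite_Icc 1 (2 * D)).cast_ncard_eq,
      Set.ncard_eq_toFinset_card' (Set.Icc 1 (2 * D)), Set.toFinset_Icc, Nat.card_Icc, Nat.cast_le]
    have h₁ := (Set.ncard_le_ncard hz hu).trans (Set.ncard_union_le _ _)
    have h₂ := hcard (H.parent P) (H.slot P)
    have h₃ := hcard (H.parent P) z
    omega
  choose J hmaps hinj using hJ
  refine ⟨fun c ↦ J (H.host t m c) c, fun P ↦ ⟨?_, ?_⟩⟩
  · rintro c ⟨hc, rfl, hne⟩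
    exact hmaps _ ⟨hc, rfl, hne⟩
  · rintro c ⟨hc, rfl, hne⟩ c' ⟨hc', hP, hne'⟩ heq
    dsimp only at heq
    rw [hP] at heq
    exact hinj _ ⟨hc, rfl, hne⟩ ⟨hc', hP, hne'⟩ heq

variable {J : X → ℕ} (hJm : ∀ P, Set.MapsTo J (H.guests t m P) (Set.Icc 1 m))
include hJm

theorem isPort_place {c : X} (hc : c ≠ root) :
    (H.place t m J c).1 = root ∨ (H.place t m J c).2 ≠ entry (H.place t m J c).1 := by
  by_cases h : H.host t m c = c
  · rw [H.place_of_host_eq h]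
    exact .inr (ne_entry_of_not_reserved ht₀ (H.not_reserved_of_host_eq ht ht₀ h))
  · rw [H.place_of_host_ne h]
    refine .inr fun heq ↦ ?_
    have hJ := (hJm _ ⟨hc, rfl, Ne.symm h⟩).1
    rw [ht _ (heq.trans (ht₀ _).symm)] at hJ
    exact absurd hJ (by decide)

theorem place_injOn (hJi : ∀ P, Set.InjOn J (H.guests t m P)) :
    Set.InjOn (H.place t m J) {root}ᶜ := by
  have hmixed : ∀ c c', H.host t m c = c → H.host t m c' ≠ c' → c' ≠ root →
      H.place t m J c ≠ H.place t m J c' := fun c c' h h' hc' heq ↦ by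
    rw [H.place_of_host_eq h, H.place_of_host_ne h', Prod.mk.injEq] at heq
    refine H.not_reserved_of_host_eq ht ht₀ h ⟨J c', (hJm _ ⟨hc', rfl, Ne.symm h'⟩).2, ?_⟩
    rw [heq.1, heq.2]
  intro c hc c' hc' heq
  by_cases h : H.host t m c = c <;> by_cases h' : H.host t m c' = c'
  · rw [H.place_of_host_eq h, H.place_of_host_eq h', Prod.mk.injEq] at heq
    rw [← h, ← h', host, host, heq.1, heq.2]
  · exact absurd heq (hmixed c c' h h' hc')
  · exact absurd heq.symm (hmixed c' c h' h hc)
  · rw [H.place_of_host_ne h, H.place_of_host_ne h', Prod.mk.injEq] at heq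
    refine hJi (H.host t m c) ⟨hc, rfl, Ne.symm h⟩ ⟨hc', heq.1.symm, heq.1 ▸ Ne.symm h'⟩
      (ht (H.host t m c) ?_)
    rw [heq.2, heq.1]

open Classical in
theorem exists_bijOn_ports (hJi : ∀ P, Set.InjOn J (H.guests t m P)) :
    ∃ f : X → X × Z, Set.BijOn f {root}ᶜ {p | p.1 = root ∨ p.2 ≠ entry p.1} ∧
      ∀ c, c ≠ root → f c = (H.parent c, H.slot c) ∨
        H.host t m c ≠ c ∧ f c = (H.host t m c, t (H.host t m c) (J c)) := by
  obtain ⟨f, hf, hcases⟩ : ∃ f : {c // c ≠ root} → {p : X × Z // p.1 = root ∨ p.2 ≠ entry p.1},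
      f.Bijective ∧ ∀ c, (f c : X × Z) = (H.parent c, H.slot c) ∨ (f c : X × Z) = _ :=
    Function.Embedding.schroeder_bernstein_of_rel
      (f := fun c ↦ ⟨H.place t m J c, H.isPort_place ht ht₀ hJm c.2⟩)
      (g := fun p ↦ ⟨H.primary p.1.1 p.1.2, (H.primary_mem_children p.2).1⟩)
      (fun c c' h ↦ Subtype.ext (H.place_injOn ht ht₀ hJm hJi c.2 c'.2 (Subtype.ext_iff.1 h)))
      (fun p q h ↦ Subtype.ext (H.primary_injOn p.2 q.2 (Subtype.ext_iff.1 h)))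
      (fun c p ↦ (p : X × Z) = (H.parent c, H.slot c) ∨ (p : X × Z) = H.place t m J c)
      (fun c ↦ .inr rfl) fun p ↦
        have hp := (H.primary_mem_children p.2).2
        .inl (Prod.ext hp.1.symm hp.2.symm)
  obtain ⟨F, hF⟩ : ∃ F : X → X × Z, ∀ c (hc : c ≠ root), F c = f ⟨c, hc⟩ :=
    ⟨fun c ↦ if hc : c ≠ root then f ⟨c, hc⟩ else (root, entry root), fun c hc ↦ dif_pos hc⟩
  refine ⟨F, ⟨fun c hc ↦ ?_, fun c hc c' hc' heq ↦ ?_, fun p hp ↦ ?_⟩, fun c hc ↦ ?_⟩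
  · rw [hF c hc]
    exact (f _).2
  · rw [hF c hc, hF c' hc'] at heq
    exact congrArg Subtype.val (hf.1 (Subtype.ext heq))
  · obtain ⟨c, hc⟩ := hf.2 ⟨p, hp⟩
    exact ⟨c, c.2, (hF c c.2).trans (congrArg Subtype.val hc)⟩
  · rw [hF c hc]
    by_cases h : H.host t m c = c
    · exact .inl ((hcases _).elim id (·.trans (H.place_of_host_eq h)))
    · exact (hcases _).imp_right fun hc' ↦ ⟨h, hc'.trans (H.place_of_host_ne h)⟩

end Regularization

section Perturbation

variable {X Z : Type*} {root : X} {entry : X → Z}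

/-- `H'` is obtained from `H` by moving some of the copies, each of them to a sibling which keeps
its place, so that all ports involved are related by `near`. -/
def IsPerturbation (near : Z → Z → Prop) (H' H : Hierarchy root entry) : Prop :=
  ∀ c, c ≠ root → (H'.parent c = H.parent c ∧ H'.slot c = H.slot c) ∨
    ∃ P, P ≠ root ∧ H'.parent c = P ∧ H'.parent P = H.parent P ∧ H'.slot P = H.slot P ∧
      H.parent P = H.parent c ∧ near (H.slot P) (H.slot c) ∧ near (H'.slot c) (entry P)

variable (H : Hierarchy root entry) {near : Z → Z → Prop} {t : X → ℕ → Z}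

theorem near_slot_host (hrefl : ∀ z, near z z) (ht : ∀ a, (t a).Injective)
    (ht₀ : ∀ a, t a 0 = entry a) {m : ℕ}
    (hnear : ∀ a, ∀ i ≤ 2 * m + 1, ∀ j ≤ 2 * m + 1, near (t a i) (t a j)) (c : X) :
    near (H.slot (H.host t m c)) (H.slot c) := by
  rw [(H.host_mem_children ht ht₀ c).2.2]
  by_cases h : Reserved t m (H.parent c) (H.slot c)
  · obtain ⟨i, hi, hz, hs⟩ := h.exists_shift_eq
    rw [hs, hz]
    exact hnear _ _ (by omega) _ (by omega)
  · rw [shift_of_not_reserved h]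
    exact hrefl _

theorem exists_isRegular_of_bijOn (f : X → X × Z)
    (hf : Set.BijOn f {root}ᶜ {p | p.1 = root ∨ p.2 ≠ entry p.1}) (depth : X → ℕ)
    (hdepth : ∀ c, c ≠ root → depth (f c).1 < depth c) :
    ∃ H : Hierarchy root entry, H.IsRegular ∧ ∀ c, (H.parent c, H.slot c) = f c := by
  refine ⟨⟨fun c ↦ (f c).1, fun c ↦ (f c).2, depth, hdepth, fun a z hz ↦ ?_⟩,
    ⟨fun c hc ↦ hf.mapsTo hc, hf.injOn⟩, fun c ↦ rfl⟩
  obtain ⟨c, hc, heq⟩ := hf.surjOn (show (a, z) ∈ _ from hz)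
  exact ⟨c, hc, congrArg Prod.fst heq, congrArg Prod.snd heq⟩

theorem exists_isRegular_isPerturbation (hrefl : ∀ z, near z z) {D : ℕ}
    (hfin : ∀ a z, (H.children a z).Finite) (hcard : ∀ a z, (H.children a z).ncard ≤ D)
    (ht : ∀ a, (t a).Injective) (ht₀ : ∀ a, t a 0 = entry a)
    (hnear : ∀ a, ∀ i ≤ 2 * (2 * D) + 1, ∀ j ≤ 2 * (2 * D) + 1, near (t a i) (t a j)) :
    ∃ H' : Hierarchy root entry, H'.IsRegular ∧ H'.IsPerturbation near H := by
  classical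
  set m := 2 * D
  obtain ⟨J, hJ⟩ := H.exists_injOn_guests ht ht₀ (m := m) hfin hcard
  obtain ⟨f, hbij, hf⟩ := H.exists_bijOn_ports ht ht₀ (fun P ↦ (hJ P).1) fun P ↦ (hJ P).2
  have hkept : ∀ c, c ≠ root → H.host t m c = c → f c = (H.parent c, H.slot c) :=
    fun c hc h ↦ (hf c hc).resolve_right fun h' ↦ h'.1 h
  have hhost : ∀ c, H.host t m c ≠ root ∧ H.parent (H.host t m c) = H.parent c ∧
      H.host t m (H.host t m c) = H.host t m c := fun c ↦
    have h := H.host_mem_children ht ht₀ c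
    ⟨h.1, h.2.1, H.host_host ht ht₀ c⟩
  -- Adding `1` at the moved copies places them below the siblings they are moved to.
  let depth (c : X) : ℕ := if c = root then 0 else
    2 * H.depth (H.parent c) + if H.host t m c = c then 1 else 2
  have hdepth : ∀ c, c ≠ root → depth (f c).1 < depth c := fun c hc ↦ by
    rcases hf c hc with h | ⟨hne, h⟩
    · rw [h]
      have := H.depth_parent_lt (H.parent c)
      simp only [depth, hc, if_false]
      split_ifs <;> grind
    · obtain ⟨hr, hp, hh⟩ := hhost c
      simp only [h, depth, hc, hr, hp, hh, hne, if_false, if_true]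
      exact Nat.lt_succ_self _
  obtain ⟨H', hH', hf'⟩ := exists_isRegular_of_bijOn f hbij depth hdepth
  have heq : ∀ {c p}, f c = p → H'.parent c = p.1 ∧ H'.slot c = p.2 :=
    fun h ↦ Prod.mk.inj ((hf' _).trans h)
  refine ⟨H', hH', fun c hc ↦ ?_⟩
  refine (hf c hc).imp heq fun ⟨hne, hc'⟩ ↦ ?_
  obtain ⟨hr, hp, hh⟩ := hhost c
  have hP := heq (hkept _ hr hh)
  have hJc : J c ≤ m := ((hJ _).1 ⟨hc, rfl, Ne.symm hne⟩).2
  refine ⟨H.host t m c, hr, (heq hc').1, hP.1, hP.2, hp,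
    H.near_slot_host hrefl ht ht₀ hnear c, ?_⟩
  rw [(heq hc').2, ← ht₀]
  exact hnear _ _ (by omega) _ (Nat.zero_le _)

end Perturbation

end Hierarchy

/-! ### Rooted tree amalgamations -/

theorem QuasiTransitive.exists_radius_ncard_closedBall_lt {V : Type u} {W : Type v}
    {G : SimpleGraph V} {H : SimpleGraph W} (hG : G.Connected) (hH : H.Connected)
    (hGqt : QuasiTransitive G) (hHqt : QuasiTransitive H) {f : V → W}
    (hf : ∀ v, ∃ r, (closedBall G v r).ncard < (closedBall H (f v) r).ncard) :
    ∃ R, ∀ v, ∃ r ≤ R, (closedBall G v r).ncard < (closedBall H (f v) r).ncard := by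
  let profile (v : V) : (ℕ → ℕ) × (ℕ → ℕ) :=
    (fun r ↦ (closedBall G v r).ncard, fun r ↦ (closedBall H (f v) r).ncard)
  have hfin : (Set.range profile).Finite :=
    ((hGqt.finite_range_ncard_closedBall hG).prod (hHqt.finite_range_ncard_closedBall hH)).subset
      (by rintro _ ⟨v, rfl⟩; exact ⟨⟨v, rfl⟩, ⟨f v, rfl⟩⟩)
  have hradius : ∀ p : Set.range profile, ∃ r, p.1.1 r < p.1.2 r := by
    rintro ⟨_, v, rfl⟩
    exact hf v
  choose radius hradius using hradius
  have := hfin.to_subtype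
  obtain ⟨R, hR⟩ := (Set.finite_range radius).bddAbove
  exact ⟨R, fun v ↦ ⟨radius ⟨_, v, rfl⟩, hR ⟨_, rfl⟩, hradius ⟨_, v, rfl⟩⟩⟩

theorem GoodAction.exists_dist_le {V K : Type u} {G : SimpleGraph V} {S : K → Set V}
    (h : GoodAction G S) (hG : G.Connected) (hS : ∀ k, (S k).Finite) :
    ∃ C, ∀ k, ∀ x ∈ S k, ∀ y ∈ S k, G.dist x y ≤ C := by
  obtain ⟨Γ, -, I, hI, horbit⟩ := h
  obtain ⟨C, hC⟩ := (hI.biUnion fun k _ ↦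
    ((hS k).prod (hS k)).image fun p ↦ G.dist p.1 p.2).bddAbove
  refine ⟨C, fun k x hx y hy ↦ ?_⟩
  obtain ⟨k', hk', g, -, hg⟩ := horbit k
  rw [← hg] at hx hy
  obtain ⟨x, hx, rfl⟩ := hx
  obtain ⟨y, hy, rfl⟩ := hy
  rw [dist_iso_apply hG]
  exact hC (Set.mem_biUnion hk' ⟨(x, y), ⟨hx, hy⟩, rfl⟩)

namespace TreeAmalgData

section Rooting

variable {V1 V2 : Type u} {G1 : SimpleGraph V1} {G2 : SimpleGraph V2} (D : TreeAmalgData G1 G2)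

/-- A choice of a root in the class `VT1` of the tree of `D`: `above b` is the parent of `b : VT2`
and `hub a` the parent of `a : VT1`, which is meaningful only for `a ≠ root`. -/
structure Rooting where
  root : D.VT1
  hub : D.VT1 → D.VT2
  above : D.VT2 → D.VT1
  level : D.VT1 → ℕ
  adj_hub : ∀ a, a ≠ root → D.Tadj a (hub a)
  adj_above : ∀ b, D.Tadj (above b) b
  eq_above_or_eq_hub : ∀ a b, D.Tadj a b → a = above b ∨ a ≠ root ∧ b = hub a
  level_lt : ∀ a, a ≠ root → level (above (hub a)) < level a

variable {D}

theorem adj_inl_inr {a : D.VT1} {b : D.VT2} :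
    (bipGraph D.Tadj).Adj (.inl a) (.inr b) ↔ D.Tadj a b := by
  simp [bipGraph]

theorem exists_eq_inr_of_adj_inl {a : D.VT1} {t : D.VT1 ⊕ D.VT2}
    (h : (bipGraph D.Tadj).Adj (.inl a) t) : ∃ b, t = .inr b ∧ D.Tadj a b := by
  obtain a' | b := t
  · simp [bipGraph] at h
  · exact ⟨b, rfl, adj_inl_inr.1 h⟩

theorem exists_eq_inl_of_adj_inr {b : D.VT2} {t : D.VT1 ⊕ D.VT2}
    (h : (bipGraph D.Tadj).Adj (.inr b) t) : ∃ a, t = .inl a ∧ D.Tadj a b := by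
  obtain a | b' := t
  · exact ⟨a, rfl, adj_inl_inr.1 h.symm⟩
  · simp [bipGraph] at h

theorem nonempty_rooting [Nontrivial D.VT1] : Nonempty D.Rooting := by
  obtain ⟨root⟩ : Nonempty D.VT1 := inferInstance
  have hconn := D.isTree.connected
  set depth := (bipGraph D.Tadj).dist (.inl root) with hdepth
  have hpos : ∀ t, t ≠ .inl root → ∃ n, depth t = n + 1 := fun t ht ↦
    Nat.exists_eq_succ_of_ne_zero (hconn.pos_dist_of_ne ht.symm).ne'
  have habove : ∀ b, ∃ a, D.Tadj a b ∧ depth (.inr b) = depth (.inl a) + 1 := fun b ↦ by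
    obtain ⟨n, hn⟩ := hpos (.inr b) (by simp)
    obtain ⟨t, ht, hadj⟩ := exists_adj_of_dist_eq_succ hconn hn
    obtain ⟨a, rfl, hab⟩ := exists_eq_inl_of_adj_inr hadj.symm
    exact ⟨a, hab, by rw [hn, hdepth, ht]⟩
  have hhub : ∀ a, a ≠ root → ∃ b, D.Tadj a b ∧ depth (.inl a) = depth (.inr b) + 1 :=
    fun a ha ↦ by
      obtain ⟨n, hn⟩ := hpos (.inl a) (by simpa using ha)
      obtain ⟨t, ht, hadj⟩ := exists_adj_of_dist_eq_succ hconn hn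
      obtain ⟨b, rfl, hab⟩ := exists_eq_inr_of_adj_inl hadj.symm
      exact ⟨b, hab, by rw [hn, hdepth, ht]⟩
  have : Nonempty D.VT2 := (exists_ne root).elim fun a ha ↦ ⟨(hhub a ha).choose⟩
  choose above hadj_above hdepth_above using habove
  choose! hub hhub using hhub
  refine ⟨⟨root, hub, above, fun a ↦ depth (.inl a), fun a ha ↦ (hhub a ha).1, hadj_above,
    fun a b hab ↦ ?_, fun a ha ↦ ?_⟩⟩
  · rcases D.isTree.dist_eq_dist_add_one_of_adj (.inl root) (adj_inl_inr.2 hab) with h | h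
    · have ha : a ≠ root := by
        rintro rfl
        simp at h
      refine .inr ⟨ha, Sum.inr_injective (α := D.VT1) ?_⟩
      exact eq_of_adj_of_dist_eq_add_one D.isTree (adj_inl_inr.2 hab).symm
        (adj_inl_inr.2 (hhub a ha).1).symm h (hhub a ha).2
    · exact .inl (Sum.inl_injective (eq_of_adj_of_dist_eq_add_one D.isTree (adj_inl_inr.2 hab)
        (adj_inl_inr.2 (hadj_above b)) h (hdepth_above b)))
  · have := (hhub a ha).2
    have := hdepth_above (hub a)
    omega

theorem exists_tadj_tadj_ne (hstar : ∃ x y, 2 < (bipGraph D.Tadj).dist x y) :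
    ∃ a a' b, D.Tadj a b ∧ D.Tadj a' b ∧ a ≠ a' := by
  obtain ⟨x, y, hxy⟩ := hstar
  have hsites : ∀ {t t' b}, (bipGraph D.Tadj).Adj t (.inr b) → (bipGraph D.Tadj).Adj (.inr b) t' →
      t ≠ t' → ∃ a a' b, D.Tadj a b ∧ D.Tadj a' b ∧ a ≠ a' := fun {t t' b} h h' hne ↦ by
    obtain ⟨a, rfl, hab⟩ := exists_eq_inl_of_adj_inr h.symm
    obtain ⟨a', rfl, hab'⟩ := exists_eq_inl_of_adj_inr h'
    exact ⟨a, a', b, hab, hab', fun h ↦ hne (congrArg _ h)⟩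
  obtain ⟨p, hp⟩ := D.isTree.connected.exists_walk_length_eq_dist x y
  have hpath := p.isPath_of_length_eq_dist hp
  have hadj : ∀ i < 3, (bipGraph D.Tadj).Adj (p.getVert i) (p.getVert (i + 1)) :=
    fun i hi ↦ p.adj_getVert_succ (by omega)
  have hne : ∀ i < 2, p.getVert i ≠ p.getVert (i + 2) := fun i hi h ↦ by
    have := hpath.getVert_injOn (by simp; omega) (by simp; omega) h
    omega
  rcases h₁ : p.getVert 1 with a | b
  · obtain ⟨b, h₂, -⟩ := exists_eq_inr_of_adj_inl (h₁ ▸ hadj 1 (by simp))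
    exact hsites (h₂ ▸ hadj 1 (by simp)) (h₂ ▸ hadj 2 (by simp)) (hne 1 (by simp))
  · exact hsites (h₁ ▸ hadj 0 (by simp)) (h₁ ▸ hadj 1 (by simp)) (hne 0 (by simp))

theorem nontrivial_K2 {a a' : D.VT1} {b : D.VT2} (h : D.Tadj a b) (h' : D.Tadj a' b)
    (hne : a ≠ a') : Nontrivial D.K2 :=
  ⟨D.lab2 a b h, D.lab2 a' b h', fun heq ↦ hne <|
    congrArg Subtype.val ((D.lab2_bij b).1 (a₁ := ⟨a, h⟩) (a₂ := ⟨a', h'⟩) heq)⟩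

theorem exists_ne_adj [Nontrivial D.K2] (a : D.VT1) (b : D.VT2) : ∃ a', a' ≠ a ∧ D.Tadj a' b := by
  by_contra! hall
  obtain ⟨l, l', hl⟩ := exists_pair_ne D.K2
  obtain ⟨⟨c, hc⟩, rfl⟩ := (D.lab2_bij b).2 l
  obtain ⟨⟨c', hc'⟩, rfl⟩ := (D.lab2_bij b).2 l'
  obtain rfl : c = a := by_contra fun h ↦ hall c h hc
  obtain rfl : c' = c := by_contra fun h ↦ hall c' h hc'
  exact hl rfl

end Rooting

end TreeAmalgData

namespace TreeAmalgData

variable {V1 V2 : Type u} {G1 : SimpleGraph V1} {G2 : SimpleGraph V2} {D : TreeAmalgData G1 G2}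

namespace Rooting

variable (R : D.Rooting)

/-- `R.Below p q` means that `p` and `q` are glued and that the tree vertex of `q` is the parent of
the tree vertex of `p`. -/
def Below : D.PlusV → D.PlusV → Prop
  | .inl p, .inr q => D.cross p q ∧ p.1 ≠ R.root ∧ q.1 = R.hub p.1
  | .inr q, .inl p => D.cross p q ∧ p.1 = R.above q.1
  | _, _ => False

/-- A height of the vertices of `G1 + G2` that drops along `R.Below`. -/
def height : D.PlusV → ℕ
  | .inl p => 2 * R.level p.1
  | .inr q => 2 * R.level (R.above q.1) + 1

/-- The vertices that are not glued to a vertex in the parent copy. -/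
def IsTop (p : D.PlusV) : Prop := ∀ q, ¬ R.Below p q

variable {R}

theorem below_or_below_of_idRel {p q : D.PlusV} (h : D.idRel p q) :
    R.Below p q ∨ R.Below q p := by
  obtain ⟨p, q, rfl, rfl, h⟩ := h
  exact (R.eq_above_or_eq_hub _ _ h.1).symm.imp (⟨h, ·⟩) (⟨h, ·⟩)

theorem Below.toAmalg_eq {p q : D.PlusV} (h : R.Below p q) : D.toAmalg p = D.toAmalg q := by
  obtain p | p := p <;> obtain q | q := q
  · exact h.elim
  · exact Quot.sound ⟨p, q, rfl, rfl, h.1⟩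
  · exact (Quot.sound ⟨q, p, rfl, rfl, h.1⟩).symm
  · exact h.elim

theorem Below.right_unique {p q q' : D.PlusV} (h : R.Below p q) (h' : R.Below p q') :
    q = q' := by
  obtain ⟨a, x⟩ | ⟨b, y⟩ := p
  · obtain _ | ⟨b, y⟩ := q
    · exact h.elim
    obtain _ | ⟨b', y'⟩ := q'
    · exact h'.elim
    obtain ⟨⟨_, -, hy⟩, -, rfl⟩ := h
    obtain ⟨⟨_, -, hy'⟩, -, rfl⟩ := h'
    exact congrArg _ (Prod.ext rfl (hy.trans hy'.symm))
  · obtain ⟨a, x⟩ | _ := q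
    swap
    · exact h.elim
    obtain ⟨a', x'⟩ | _ := q'
    swap
    · exact h'.elim
    obtain ⟨⟨_, hx, hy⟩, rfl⟩ := h
    obtain ⟨⟨_, hx', hy'⟩, rfl⟩ := h'
    exact congrArg _ (Prod.ext rfl ((D.glue_bij _ _).injOn hx hx' (hy.symm.trans hy')))

theorem Below.height_lt {p q : D.PlusV} (h : R.Below p q) : R.height q < R.height p := by
  obtain p | p := p <;> obtain q | q := q
  · exact h.elim
  · obtain ⟨-, hp, hq⟩ := h
    have := R.level_lt p.1 hp
    rw [height, height, hq]
    omega
  · obtain ⟨-, hp⟩ := h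
    rw [height, height, hp]
    omega
  · exact h.elim

theorem isTop_inl_root (x : V1) : R.IsTop (.inl (R.root, x)) := by
  rintro (_ | q) h
  · exact h
  · exact h.2.1 rfl

theorem IsTop.reflTransGen_below {p q : D.PlusV} (hq : R.IsTop q)
    (h : D.toAmalg p = D.toAmalg q) : Relation.ReflTransGen R.Below p q := by
  have hstep : ∀ {p p'}, R.Below p p' →
      (Relation.ReflTransGen R.Below p q ↔ Relation.ReflTransGen R.Below p' q) :=
    fun {p p'} hp ↦ by
      refine ⟨fun hpq ↦ ?_, .head hp⟩
      rcases hpq.cases_head with rfl | ⟨p'', hp'', hpq⟩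
      · exact absurd hp (hq p')
      · rwa [hp.right_unique hp'']
  let reaches : D.AmalgV → Prop := Quot.lift (Relation.ReflTransGen R.Below · q) fun p p' hp ↦
    propext ((below_or_below_of_idRel hp).elim hstep fun h ↦ (hstep h).symm)
  have hreaches : reaches (D.toAmalg q) := .refl
  rwa [← h] at hreaches

theorem IsTop.eq {p q : D.PlusV} (hp : R.IsTop p) (hq : R.IsTop q)
    (h : D.toAmalg p = D.toAmalg q) : p = q := by
  rcases (hq.reflTransGen_below h).cases_head with heq | ⟨p', hp', -⟩
  · exact heq
  · exact absurd hp' (hp p')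

end Rooting

/-- The copies of `G1` that meet the set `S` of vertices of the tree amalgamation. -/
def copiesMeeting (D : TreeAmalgData G1 G2) (S : Set D.AmalgV) : Set D.VT1 :=
  {a | ∃ x, D.toAmalg (.inl (a, x)) ∈ S}

namespace Rooting

variable (R : D.Rooting)

/-- The copies of `G1` that contain the vertex of the amalgamation represented by `p` and lie no
higher in the tree than `p` permits: only these can be met on the way up from `p`. -/
def sitesAbove (p : D.PlusV) : Set D.VT1 :=
  {a ∈ D.copiesMeeting {D.toAmalg p} | 2 * R.level a ≤ R.height p}

/-- A bound for the number of steps along `R.Below` that lead from `p` to an `R.IsTop` vertex. Two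
consecutive steps leave a copy of `G1` that is not met again, since the levels drop. -/
noncomputable def climbBound : D.PlusV → ℕ
  | .inl p => 2 * (R.sitesAbove (.inl p)).ncard
  | .inr q => 2 * (R.sitesAbove (.inr q)).ncard + 1

variable {R}

theorem Below.climbBound_lt {p q : D.PlusV} (h : R.Below p q)
    (hfin : (D.copiesMeeting {D.toAmalg p}).Finite) : R.climbBound q < R.climbBound p := by
  have hlt := h.height_lt
  have hsub : R.sitesAbove q ⊆ R.sitesAbove p := fun a ha ↦
    ⟨by simpa only [h.toAmalg_eq] using ha.1, ha.2.trans hlt.le⟩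
  have hfin' : (R.sitesAbove p).Finite := hfin.subset (Set.sep_subset _ _)
  obtain p | p := p <;> obtain q | q := q
  · exact h.elim
  · have hmem : p.1 ∈ R.sitesAbove (.inl p) := ⟨⟨p.2, rfl⟩, le_rfl⟩
    have hnot : p.1 ∉ R.sitesAbove (.inr q) := fun hp ↦ hlt.not_ge hp.2
    have := Set.ncard_lt_ncard (hsub.ssubset_of_mem_notMem hmem hnot) hfin'
    simp only [climbBound]
    omega
  · have := Set.ncard_le_ncard hsub hfin'
    simp only [climbBound]
    omega
  · exact h.elim

theorem climbBound_le {p : D.PlusV} {N : ℕ} (hfin : (D.copiesMeeting {D.toAmalg p}).Finite)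
    (hN : (D.copiesMeeting {D.toAmalg p}).ncard ≤ N) : R.climbBound p ≤ 2 * N + 1 := by
  have : (R.sitesAbove p).ncard ≤ N := (Set.ncard_le_ncard (Set.sep_subset _ _) hfin).trans hN
  cases p <;> simp only [climbBound] <;> omega

theorem exists_isTop_dist_le {W : Type*} {H : SimpleGraph W} (hH : H.Connected) {F : D.PlusV → W}
    {C : ℕ} (hF : ∀ p q, R.Below p q → H.dist (F p) (F q) ≤ C) (p : D.PlusV)
    (hfin : (D.copiesMeeting {D.toAmalg p}).Finite) :
    ∃ q, R.IsTop q ∧ D.toAmalg p = D.toAmalg q ∧ H.dist (F p) (F q) ≤ R.climbBound p * C := by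
  induction hn : R.climbBound p using Nat.strong_induction_on generalizing p with
  | _ n ih =>
    subst hn
    by_cases htop : R.IsTop p
    · exact ⟨p, htop, rfl, by simp⟩
    · rw [IsTop] at htop
      push Not at htop
      obtain ⟨p', hp'⟩ := htop
      have hlt := hp'.climbBound_lt hfin
      have heq := hp'.toAmalg_eq
      obtain ⟨q, hq, hqp, hdist⟩ := ih _ hlt p' (heq ▸ hfin) rfl
      refine ⟨q, hq, heq.trans hqp, ?_⟩
      calc H.dist (F p) (F q) ≤ H.dist (F p) (F p') + H.dist (F p') (F q) := hH.dist_triangle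
        _ ≤ C + R.climbBound p' * C := Nat.add_le_add (hF p p' hp') hdist
        _ = (R.climbBound p' + 1) * C := by rw [Nat.succ_mul, Nat.add_comm]
        _ ≤ R.climbBound p * C := Nat.mul_le_mul_right C hlt

end Rooting

theorem Rooting.injective_toAmalg_inl_root (R : D.Rooting) :
    Function.Injective fun x ↦ D.toAmalg (.inl (R.root, x)) := fun x y h ↦
  congrArg Prod.snd (Sum.inl_injective (IsTop.eq (isTop_inl_root x) (isTop_inl_root y) h))

theorem eq_of_toAmalg_inl_eq {a : D.VT1} {x : V1} (hx : ∀ k, x ∉ D.S1 k) {p : D.PlusV}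
    (h : D.toAmalg (.inl (a, x)) = D.toAmalg p) : .inl (a, x) = p := by
  let isPoint : D.AmalgV → Prop := Quot.lift (.inl (a, x) = ·) fun p q ⟨p', q', hp, hq, hpq⟩ ↦ by
    obtain ⟨_, hmem, -⟩ := hpq
    subst hp hq
    refine propext ⟨fun h ↦ ?_, fun h ↦ nomatch h⟩
    obtain rfl := Sum.inl_injective h
    exact absurd hmem (hx _)
  have hpoint : isPoint (D.toAmalg (.inl (a, x))) := rfl
  rwa [h] at hpoint

theorem dist_toAmalg_inl_le (hc1 : G1.Connected) (a : D.VT1) (x y : V1) :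
    D.amalgGraph.dist (D.toAmalg (.inl (a, x))) (D.toAmalg (.inl (a, y))) ≤ G1.dist x y :=
  dist_le_dist_of_edist_le hc1 (D.edist_toAmalg_inl_le a x y)

theorem closedBall_toAmalg_inl_subset (hc1 : G1.Connected) (hA : D.amalgGraph.Connected)
    {a : D.VT1} {x : V1} {r : ℕ} (hr : ∀ k, ∀ y ∈ D.S1 k, r < G1.dist x y) :
    closedBall D.amalgGraph (D.toAmalg (.inl (a, x))) r ⊆
      (fun y ↦ D.toAmalg (.inl (a, y))) '' closedBall G1 x r := by
  induction r with
  | zero => exact fun v hv ↦ ⟨x, by simp [closedBall], hA.dist_eq_zero_iff.1 (Nat.le_zero.1 hv)⟩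
  | succ r ih =>
    intro v hv
    specialize ih fun k y hy ↦ (Nat.lt_succ_self r).trans (hr k y hy)
    obtain hv | hv := Nat.le_succ_iff.1 hv
    · obtain ⟨y, hy, rfl⟩ := ih hv
      exact ⟨y, Nat.le_succ_of_le hy, rfl⟩
    obtain ⟨w, hw, hadj⟩ := exists_adj_of_dist_eq_succ hA hv
    obtain ⟨y, hy, rfl⟩ := ih hw.le
    have hy' : ∀ k, y ∉ D.S1 k := fun k hk ↦
      absurd (hr k y hk) (Nat.le_succ_of_le hy).not_gt
    obtain ⟨a', x', y', hx', rfl, hadj'⟩ | ⟨b, x', y', hx', -⟩ :=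
      D.exists_of_amalgGraph_adj hadj
    · cases eq_of_toAmalg_inl_eq hy' hx'
      refine ⟨y', hc1.dist_triangle.trans (Nat.add_le_add hy ?_), rfl⟩
      exact (dist_eq_one_iff_adj.2 hadj').le
    · cases eq_of_toAmalg_inl_eq hy' hx'

section LocalBounds

variable [Infinite V1] (R : D.Rooting) (hc1 : G1.Connected) (hlf1 : LocallyFiniteGraph G1) {C : ℕ}
  (hC : ∀ k, ∀ x ∈ D.S1 k, ∀ y ∈ D.S1 k, G1.dist x y ≤ C)
include hc1 hlf1 hC

theorem Rooting.exists_isTop_inl_near (a : D.VT1) (x : V1) :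
    ∃ y, G1.dist x y ≤ C + 1 ∧ R.IsTop (.inl (a, y)) := by
  by_cases hx : R.IsTop (.inl (a, x))
  · exact ⟨x, by simp, hx⟩
  obtain ⟨y, hy⟩ := exists_vertex_dist_eq hc1 hlf1 x (C + 1)
  refine ⟨y, hy.le, fun q hyq ↦ hx fun p hxp ↦ ?_⟩
  obtain _ | ⟨b, z⟩ := p
  · exact hxp
  obtain _ | ⟨b', z'⟩ := q
  · exact hyq
  obtain ⟨⟨_, hx, -⟩, -, rfl⟩ := hxp
  obtain ⟨⟨_, hy', -⟩, -, rfl⟩ := hyq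
  have := hC _ x hx y hy'
  omega

include R in
theorem finite_and_ncard_copiesMeeting_closedBall_le (hA : D.amalgGraph.Connected)
    (hlf : LocallyFiniteGraph D.amalgGraph) (v : D.AmalgV) (r : ℕ) :
    (D.copiesMeeting (closedBall D.amalgGraph v r)).Finite ∧
      (D.copiesMeeting (closedBall D.amalgGraph v r)).ncard ≤
        (closedBall D.amalgGraph v (r + (C + 1))).ncard := by
  have htop : ∀ a, ∃ y, a ∈ D.copiesMeeting (closedBall D.amalgGraph v r) →
      D.toAmalg (.inl (a, y)) ∈ closedBall D.amalgGraph v (r + (C + 1)) ∧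
        R.IsTop (.inl (a, y)) := fun a ↦ by
    by_cases ha : a ∈ D.copiesMeeting (closedBall D.amalgGraph v r)
    · obtain ⟨x, hx⟩ := ha
      obtain ⟨y, hxy, hy⟩ := R.exists_isTop_inl_near hc1 hlf1 hC a x
      exact ⟨y, fun _ ↦ ⟨hA.dist_triangle.trans
        (Nat.add_le_add hx ((dist_toAmalg_inl_le hc1 a x y).trans hxy)), hy⟩⟩
    · exact ⟨hc1.nonempty.some, fun h ↦ absurd h ha⟩
  choose y hy using htop
  have hmaps : Set.MapsTo (fun a ↦ D.toAmalg (.inl (a, y a)))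
      (D.copiesMeeting (closedBall D.amalgGraph v r)) (closedBall D.amalgGraph v (r + (C + 1))) :=
    fun a ha ↦ (hy a ha).1
  have hinj : Set.InjOn (fun a ↦ D.toAmalg (.inl (a, y a)))
      (D.copiesMeeting (closedBall D.amalgGraph v r)) := fun a ha a' ha' h ↦
    congrArg Prod.fst (Sum.inl_injective ((hy a ha).2.eq (hy a' ha').2 h))
  have hball := finite_closedBall hA hlf v (r + (C + 1))
  exact ⟨.of_injOn hmaps hinj hball, Set.ncard_le_ncard_of_injOn _ hmaps hinj hball⟩

include R in
theorem exists_ncard_copiesMeeting_closedBall_le (hA : D.amalgGraph.Connected)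
    (hlf : LocallyFiniteGraph D.amalgGraph) (hqt : QuasiTransitive D.amalgGraph) (r : ℕ) :
    ∃ B, ∀ v, (D.copiesMeeting (closedBall D.amalgGraph v r)).Finite ∧
      (D.copiesMeeting (closedBall D.amalgGraph v r)).ncard ≤ B := by
  obtain ⟨B, hB⟩ := hqt.exists_ncard_closedBall_le hA (r + (C + 1))
  have h := finite_and_ncard_copiesMeeting_closedBall_le R hc1 hlf1 hC hA hlf
  exact ⟨B, fun v ↦ ⟨(h v r).1, (h v r).2.trans (hB v)⟩⟩

include R in
/-- If a ball of `G1` avoids the adhesion sets, then `G1 ∗_T G2` looks the same around the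
corresponding vertex of the root copy; by quasi-transitivity this cannot happen on arbitrarily large
scales, since the root copy is a proper part of `G1 ∗_T G2`. -/
theorem Rooting.exists_adhesion_dist_le [Nontrivial D.VT1] (hqt1 : QuasiTransitive G1)
    (hA : D.amalgGraph.Connected) (hlf : LocallyFiniteGraph D.amalgGraph)
    (hqt : QuasiTransitive D.amalgGraph) :
    ∃ ρ, ∀ x, ∃ k, ∃ y ∈ D.S1 k, G1.dist x y ≤ ρ := by
  set ι : V1 → D.AmalgV := fun x ↦ D.toAmalg (.inl (R.root, x))
  obtain ⟨v, hv⟩ : ∃ v, ∀ x, ι x ≠ v := by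
    obtain ⟨a, ha⟩ := exists_ne R.root
    obtain ⟨y, -, hy⟩ := R.exists_isTop_inl_near hc1 hlf1 hC a hc1.nonempty.some
    exact ⟨D.toAmalg (.inl (a, y)), fun x h ↦
      ha (congrArg Prod.fst (Sum.inl_injective (hy.eq (isTop_inl_root x) h.symm)))⟩
  have hlt : ∀ x, ∃ r, (closedBall G1 x r).ncard < (closedBall D.amalgGraph (ι x) r).ncard := by
    refine fun x ↦ ⟨D.amalgGraph.dist (ι x) v, ?_⟩
    rw [← Set.ncard_image_of_injective _ R.injective_toAmalg_inl_root]
    have hsub : ι '' closedBall G1 x (D.amalgGraph.dist (ι x) v) ⊆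
        closedBall D.amalgGraph (ι x) (D.amalgGraph.dist (ι x) v) :=
      Set.image_subset_iff.2 fun y hy ↦ (dist_toAmalg_inl_le hc1 R.root x y).trans hy
    have hnot : v ∉ ι '' closedBall G1 x (D.amalgGraph.dist (ι x) v) := fun ⟨y, _, hy⟩ ↦ hv y hy
    exact Set.ncard_lt_ncard (hsub.ssubset_of_mem_notMem (Nat.le_refl _) hnot)
      (finite_closedBall hA hlf _ _)
  obtain ⟨ρ, hρ⟩ := hqt1.exists_radius_ncard_closedBall_lt hc1 hA hqt hlt
  refine ⟨ρ, fun x ↦ ?_⟩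
  by_contra! hx
  obtain ⟨r, hr, hlt⟩ := hρ x
  have hball := closedBall_toAmalg_inl_subset hc1 hA (a := R.root) fun k y hy ↦
    hr.trans_lt (hx k y hy)
  refine hlt.not_ge ((Set.ncard_le_ncard hball ?_).trans (Set.ncard_image_le ?_))
  all_goals have := finite_closedBall hc1 hlf1 x r
  exacts [this.image _, this]

end LocalBounds

end TreeAmalgData

/-! ### The hierarchy of a tree amalgamation -/

namespace TreeAmalgData

variable {V1 V2 : Type u} {G1 : SimpleGraph V1} {G2 : SimpleGraph V2} {D : TreeAmalgData G1 G2}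

theorem dist_toAmalg_le_of_dist_copy_le_one {Z : Set V1}
    {P : PortTree D.VT1 Z} {C : ℕ} (hc1 : G1.Connected) (hA : D.amalgGraph.Connected)
    (heq : ∀ a b x y, P.copy G1 a x = P.copy G1 b y →
      D.amalgGraph.dist (D.toAmalg (.inl (a, x))) (D.toAmalg (.inl (b, y))) ≤ C)
    {a b : D.VT1} {x y : V1}
    (h : (P.amalgam G1).amalgGraph.dist (P.copy G1 a x) (P.copy G1 b y) ≤ 1) :
    D.amalgGraph.dist (D.toAmalg (.inl (a, x))) (D.toAmalg (.inl (b, y))) ≤ 2 * C + 1 := by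
  have hE := PortTree.connected_amalgGraph (P := P) hc1
  obtain h | h := Nat.le_one_iff_eq_zero_or_eq_one.1 h
  · have := heq _ _ _ _ (hE.dist_eq_zero_iff.1 h)
    omega
  obtain ⟨c, x', y', hx, hy, hxy⟩ := PortTree.exists_eq_copy_of_adj (dist_eq_one_iff_adj.1 h)
  have := hA.dist_triangle.trans (Nat.add_le_add (heq _ _ _ _ hx)
    (hA.dist_triangle.trans (Nat.add_le_add ((dist_toAmalg_inl_le hc1 c x' y').trans
      (dist_eq_one_iff_adj.2 hxy).le) (heq _ _ _ _ hy.symm))))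
  linarith

/-- The ports of `G1`: one vertex chosen from each adhesion set. -/
def portSet (D : TreeAmalgData G1 G2) : Set V1 := Set.range fun k ↦ (D.S1_nonempty k).some

instance [Nonempty D.K1] : Nonempty D.portSet := (Set.range_nonempty _).to_subtype

open Classical in
/-- The port chosen from the adhesion set along which the copy `a` of `G1` is glued to the copy `b`
of `G2`, meaningful only if `a` and `b` are adjacent. -/
noncomputable def port [Nonempty D.K1] (a : D.VT1) (b : D.VT2) : D.portSet :=
  if h : D.Tadj a b then ⟨_, D.lab1 a b h, rfl⟩ else Classical.arbitrary _

variable [Nonempty D.K1]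

theorem port_mem {a : D.VT1} {b : D.VT2} (h : D.Tadj a b) :
    (D.port a b : V1) ∈ D.S1 (D.lab1 a b h) := by
  rw [port, dif_pos h]
  exact (D.S1_nonempty _).some_mem

theorem exists_port_eq (a : D.VT1) (z : D.portSet) : ∃ b, D.Tadj a b ∧ D.port a b = z := by
  obtain ⟨_, k, rfl⟩ := z
  obtain ⟨⟨b, hb⟩, rfl⟩ := (D.lab1_bij a).2 k
  exact ⟨b, hb, dif_pos hb⟩

theorem toAmalg_inl_port {a : D.VT1} {b : D.VT2} (h : D.Tadj a b) :
    ∃ z, D.toAmalg (.inl (a, (D.port a b : V1))) = D.toAmalg (.inr (b, z)) :=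
  ⟨D.glue (D.lab1 a b h) (D.lab2 a b h) (D.port a b),
    Quot.sound ⟨_, _, rfl, rfl, h, port_mem h, rfl⟩⟩

theorem dist_toAmalg_inl_port_le {m : ℕ} (hm : ∀ b y z,
    D.amalgGraph.dist (D.toAmalg (.inr (b, y))) (D.toAmalg (.inr (b, z))) ≤ m)
    {a a' : D.VT1} {b : D.VT2}
    (h : D.Tadj a b) (h' : D.Tadj a' b) :
    D.amalgGraph.dist (D.toAmalg (.inl (a, (D.port a b : V1))))
      (D.toAmalg (.inl (a', (D.port a' b : V1)))) ≤ m := by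
  obtain ⟨y, hy⟩ := toAmalg_inl_port h
  obtain ⟨z, hz⟩ := toAmalg_inl_port h'
  exact hy ▸ hz ▸ hm b y z

omit [Nonempty D.K1] in
theorem exists_dist_toAmalg_inr_le [Finite V2] (hc2 : G2.Connected) : ∃ m, ∀ b y z,
    D.amalgGraph.dist (D.toAmalg (.inr (b, y))) (D.toAmalg (.inr (b, z))) ≤ m := by
  obtain ⟨m, hm⟩ := (Set.finite_range fun p : V2 × V2 ↦ G2.dist p.1 p.2).bddAbove
  exact ⟨m, fun b y z ↦ (dist_le_dist_of_edist_le hc2 (D.edist_toAmalg_inr_le b y z)).trans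
    (hm ⟨(y, z), rfl⟩)⟩

omit [Nonempty D.K1] in
theorem exists_portSet_dist_le {C ρ : ℕ} (hc1 : G1.Connected)
    (hC : ∀ k, ∀ x ∈ D.S1 k, ∀ y ∈ D.S1 k, G1.dist x y ≤ C)
    (hρ : ∀ x, ∃ k, ∃ y ∈ D.S1 k, G1.dist x y ≤ ρ) (x : V1) :
    ∃ z ∈ D.portSet, G1.dist x z ≤ ρ + C := by
  obtain ⟨k, y, hy, hxy⟩ := hρ x
  exact ⟨_, ⟨k, rfl⟩, hc1.dist_triangle.trans
    (Nat.add_le_add hxy (hC k y hy _ (D.S1_nonempty k).some_mem))⟩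

namespace Rooting

variable (R : D.Rooting)

/-- The port at which the copy `c` of `G1` is glued to its parent copy of `G2`. -/
noncomputable def entry (c : D.VT1) : D.portSet := D.port c (R.hub c)

/-- The hierarchy of the copies of `G1` in which the parent of a copy is its grandparent in the tree
of the amalgamation. -/
noncomputable def hierarchy [Nontrivial D.K2] : Hierarchy R.root R.entry where
  parent c := R.above (R.hub c)
  slot c := D.port (R.above (R.hub c)) (R.hub c)
  depth := R.level
  depth_parent_lt := R.level_lt
  exists_child a z hz := by
    obtain ⟨b, hab, rfl⟩ := exists_port_eq a z
    obtain rfl : a = R.above b := (R.eq_above_or_eq_hub a b hab).resolve_right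
      fun ⟨ha, hb⟩ ↦ hz.elim ha fun hne ↦ hne (congrArg _ hb)
    obtain ⟨c, hne, hcb⟩ := exists_ne_adj (R.above b) b
    obtain ⟨hc, rfl⟩ := (R.eq_above_or_eq_hub c b hcb).resolve_left hne
    exact ⟨c, hc, rfl, rfl⟩

variable {R} {m ρ : ℕ} (hm : ∀ b y z,
  D.amalgGraph.dist (D.toAmalg (.inr (b, y))) (D.toAmalg (.inr (b, z))) ≤ m)

section Existence
include hm

theorem dist_slot_hierarchy_le [Nontrivial D.K2] {c : D.VT1} (hc : c ≠ R.root) :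
    D.amalgGraph.dist
      (D.toAmalg (.inl (R.hierarchy.parent c, (R.hierarchy.slot c : V1))))
      (D.toAmalg (.inl (c, (R.entry c : V1)))) ≤ m :=
  dist_toAmalg_inl_port_le hm (R.adj_above _) (R.adj_hub c hc)

theorem children_hierarchy_subset [Nontrivial D.K2] (a : D.VT1) (z : D.portSet) :
    R.hierarchy.children a z ⊆
      D.copiesMeeting (closedBall D.amalgGraph (D.toAmalg (.inl (a, (z : V1)))) m) := by
  rintro c ⟨hc, rfl, rfl⟩
  exact ⟨_, dist_slot_hierarchy_le hm hc⟩

theorem exists_isRegular_isPerturbation [Infinite V1] [Nontrivial D.K2] (hc1 : G1.Connected)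
    (hlf1 : LocallyFiniteGraph G1) {N : ℕ}
    (hfin : ∀ u, (D.copiesMeeting (closedBall D.amalgGraph u m)).Finite)
    (hcard : ∀ u, (D.copiesMeeting (closedBall D.amalgGraph u m)).ncard ≤ N)
    (hρ : ∀ x, ∃ z ∈ D.portSet, G1.dist x z ≤ ρ) :
    ∃ r, ∃ H : Hierarchy R.root R.entry, H.IsRegular ∧
      H.IsPerturbation (fun y z : D.portSet ↦ G1.dist (y : V1) z ≤ r) R.hierarchy := by
  choose t ht ht₀ hdist using fun a ↦ exists_injective_seq_of_cobounded hc1 hlf1 hρ (R.entry a)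
  set r₀ := (2 * (2 * N) + 1) * (2 * ρ + 1) + ρ
  refine ⟨2 * r₀, R.hierarchy.exists_isRegular_isPerturbation (t := t) (D := N) (by simp)
    (fun a z ↦ (hfin _).subset (children_hierarchy_subset hm a z))
    (fun a z ↦ (Set.ncard_le_ncard (children_hierarchy_subset hm a z) (hfin _)).trans (hcard _))
    ht ht₀ fun a i hi j hj ↦ ?_⟩
  have hr₀ : ∀ i ≤ 2 * (2 * N) + 1, G1.dist (R.entry a : V1) (t a i) ≤ r₀ := fun i hi ↦
    (hdist a i).trans (Nat.add_le_add_right (Nat.mul_le_mul_right _ hi) _)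
  calc G1.dist (t a i : V1) (t a j)
      ≤ G1.dist (t a i : V1) (R.entry a) + G1.dist (R.entry a : V1) (t a j) := hc1.dist_triangle
    _ ≤ r₀ + r₀ := Nat.add_le_add (dist_comm (G := G1) ▸ hr₀ i hi) (hr₀ j hj)
    _ = 2 * r₀ := (Nat.two_mul _).symm

end Existence

section Collapse

variable {C N : ℕ} {P : PortTree D.VT1 D.portSet} (hc1 : G1.Connected)

/-- The map from `G1 + G2` to an amalgamation of copies of `G1` that keeps the copies of `G1` and
collapses each copy of `G2` to the port to which it is attached. -/
noncomputable def collapse (R : D.Rooting) (P : PortTree D.VT1 D.portSet) :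
    D.PlusV → (P.amalgam G1).AmalgV
  | .inl (a, y) => P.copy G1 a y
  | .inr (b, _) => P.copy G1 (R.above b) (D.port (R.above b) b)

include hc1 in
theorem dist_collapse_le_of_toAmalg_eq
    (hbelow : ∀ p q, R.Below p q →
      (P.amalgam G1).amalgGraph.dist (R.collapse P p) (R.collapse P q) ≤ C)
    (hfin : ∀ u, (D.copiesMeeting {u}).Finite) (hcard : ∀ u, (D.copiesMeeting {u}).ncard ≤ N)
    {p q : D.PlusV} (hpq : D.toAmalg p = D.toAmalg q) :
    (P.amalgam G1).amalgGraph.dist (R.collapse P p) (R.collapse P q) ≤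
      2 * ((2 * N + 1) * C) := by
  have hE := PortTree.connected_amalgGraph (P := P) hc1
  have htop (p : D.PlusV) : ∃ q, R.IsTop q ∧ D.toAmalg p = D.toAmalg q ∧
      (P.amalgam G1).amalgGraph.dist (R.collapse P p) (R.collapse P q) ≤ (2 * N + 1) * C :=
    (exists_isTop_dist_le hE hbelow p (hfin _)).imp fun q hq ↦
      ⟨hq.1, hq.2.1, hq.2.2.trans (Nat.mul_le_mul_right C (climbBound_le (hfin _) (hcard _)))⟩
  obtain ⟨p', hp', hpp', hdist⟩ := htop p
  obtain ⟨q', hq', hqq', hdist'⟩ := htop q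
  obtain rfl := hp'.eq hq' (hpp'.symm.trans (hpq.trans hqq'))
  rw [dist_comm] at hdist'
  exact Nat.two_mul _ ▸ hE.dist_triangle.trans (Nat.add_le_add hdist hdist')

include hc1 in
theorem dist_collapse_le_of_dist_toAmalg_le_one (hA : D.amalgGraph.Connected)
    (heq : ∀ p q, D.toAmalg p = D.toAmalg q →
      (P.amalgam G1).amalgGraph.dist (R.collapse P p) (R.collapse P q) ≤ C)
    (p q : D.PlusV) (hpq : D.amalgGraph.dist (D.toAmalg p) (D.toAmalg q) ≤ 1) :
    (P.amalgam G1).amalgGraph.dist (R.collapse P p) (R.collapse P q) ≤ 2 * C + 1 := by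
  have hE := PortTree.connected_amalgGraph (P := P) hc1
  obtain hpq | hpq := Nat.le_one_iff_eq_zero_or_eq_one.1 hpq
  · have := heq p q (hA.dist_eq_zero_iff.1 hpq)
    omega
  obtain ⟨p', q', hp, hq, hpq⟩ : ∃ p' q', D.toAmalg p = D.toAmalg p' ∧
      D.toAmalg q' = D.toAmalg q ∧
      (P.amalgam G1).amalgGraph.dist (R.collapse P p') (R.collapse P q') ≤ 1 := by
    obtain ⟨a, x, y, hp, hq, hxy⟩ | ⟨b, x, y, hp, hq, -⟩ :=
      D.exists_of_amalgGraph_adj (dist_eq_one_iff_adj.1 hpq)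
    · exact ⟨_, _, hp, hq.symm,
        (PortTree.dist_copy_le hc1 a x y).trans (dist_eq_one_iff_adj.2 hxy).le⟩
    · exact ⟨_, _, hp, hq.symm, by simp [collapse]⟩
  have := hE.dist_triangle.trans (Nat.add_le_add (heq _ _ hp)
    (hE.dist_triangle.trans (Nat.add_le_add hpq (heq _ _ hq))))
  linarith

include hm in
theorem exists_collapse_eq_copy (p : D.PlusV) : ∃ a x, R.collapse P p = P.copy G1 a x ∧
    D.amalgGraph.dist (D.toAmalg p) (D.toAmalg (.inl (a, x))) ≤ m := by
  obtain ⟨a, x⟩ | ⟨b, z⟩ := p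
  · exact ⟨a, x, rfl, by simp⟩
  · obtain ⟨y, hy⟩ := toAmalg_inl_port (R.adj_above b)
    exact ⟨_, _, rfl, hy ▸ hm b z y⟩

theorem dist_toAmalg_le_of_copy_eq_copy {H : Hierarchy R.root R.entry}
    (hreg : H.IsRegular)
    (hslot : ∀ c, c ≠ R.root → D.amalgGraph.dist (D.toAmalg (.inl (H.parent c, (H.slot c : V1))))
      (D.toAmalg (.inl (c, (R.entry c : V1)))) ≤ C) {a b : D.VT1} {x y : V1}
    (h : (H.portTree hreg).copy G1 a x = (H.portTree hreg).copy G1 b y) :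
    D.amalgGraph.dist (D.toAmalg (.inl (a, x))) (D.toAmalg (.inl (b, y))) ≤ C := by
  obtain h | h := PortTree.eq_or_glues_of_copy_eq_copy h
  · obtain ⟨rfl, rfl⟩ := Prod.mk.inj h
    simp
  · obtain ⟨hb, h, hy : y = _⟩ | ⟨ha, h, hx : x = _⟩ :=
      (H.glues_portTree_iff hreg).1 h
    · rw [h, hy]
      exact hslot b hb
    · rw [h, hx, dist_comm]
      exact hslot a ha

end Collapse

section Comparison

variable [Nontrivial D.K2] {H : Hierarchy R.root R.entry} {r : ℕ}
  (hH : H.IsPerturbation (fun y z : D.portSet ↦ G1.dist (y : V1) z ≤ r) R.hierarchy)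
  (hc1 : G1.Connected)

include hm hH hc1 in
theorem dist_toAmalg_slot_le (hA : D.amalgGraph.Connected) {c : D.VT1} (hc : c ≠ R.root) :
    D.amalgGraph.dist (D.toAmalg (.inl (H.parent c, (H.slot c : V1))))
      (D.toAmalg (.inl (c, (R.entry c : V1)))) ≤ 2 * m + 2 * r := by
  rcases hH c hc with ⟨hp, hs⟩ | ⟨P, hP, hcP, -, -, hpar, hslot, hentry⟩
  · rw [hp, hs]
    have := dist_slot_hierarchy_le hm hc
    omega
  let ι (a : D.VT1) (z : D.portSet) := D.toAmalg (.inl (a, (z : V1)))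
  have hpath : D.amalgGraph.dist (ι P (H.slot c)) (ι P (R.entry P)) ≤ r :=
    (dist_toAmalg_inl_le hc1 _ _ _).trans hentry
  have hup : D.amalgGraph.dist (ι P (R.entry P))
      (ι (R.hierarchy.parent P) (R.hierarchy.slot P)) ≤ m :=
    dist_comm (G := D.amalgGraph) ▸ dist_slot_hierarchy_le hm hP
  have hacross : D.amalgGraph.dist (ι (R.hierarchy.parent P) (R.hierarchy.slot P))
      (ι (R.hierarchy.parent c) (R.hierarchy.slot c)) ≤ r :=
    hpar ▸ (dist_toAmalg_inl_le hc1 _ _ _).trans hslot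
  have hdown : D.amalgGraph.dist (ι (R.hierarchy.parent c) (R.hierarchy.slot c))
      (ι c (R.entry c)) ≤ m := dist_slot_hierarchy_le hm hc
  rw [hcP]
  have := hA.dist_triangle.trans (Nat.add_le_add hpath
    (hA.dist_triangle.trans (Nat.add_le_add hup (hA.dist_triangle.trans
      (Nat.add_le_add hacross hdown)))))
  linarith

variable {P : PortTree D.VT1 D.portSet}
  (hP : ∀ c, c ≠ R.root → P.copy G1 (H.parent c) (H.slot c) = P.copy G1 c (R.entry c))

include hH hc1 hP in
theorem dist_copy_slot_hierarchy_le {c : D.VT1} (hc : c ≠ R.root) :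
    (P.amalgam G1).amalgGraph.dist (P.copy G1 c (R.entry c))
      (P.copy G1 (R.hierarchy.parent c) (R.hierarchy.slot c)) ≤ 2 * r := by
  rw [← hP c hc]
  rcases hH c hc with ⟨hp, hs⟩ | ⟨b, hb, hcb, hpb, hsb, hpar, hslot, hentry⟩
  · simp [hp, hs]
  · refine ((PortTree.connected_amalgGraph hc1).dist_triangle
      (v := P.copy G1 b (R.entry b))).trans ?_
    rw [hcb, Nat.two_mul]
    refine Nat.add_le_add ((PortTree.dist_copy_le hc1 _ _ _).trans hentry) ?_
    rw [← hP b hb, hpb, hsb, hpar]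
    exact (PortTree.dist_copy_le hc1 _ _ _).trans hslot

include hH hc1 hP in
theorem dist_collapse_le_of_below {C : ℕ}
    (hC : ∀ k, ∀ x ∈ D.S1 k, ∀ y ∈ D.S1 k, G1.dist x y ≤ C)
    (p q : D.PlusV) (hpq : R.Below p q) :
    (P.amalgam G1).amalgGraph.dist (R.collapse P p) (R.collapse P q) ≤ C + 2 * r := by
  have hE := PortTree.connected_amalgGraph (P := P) hc1
  obtain ⟨a, x⟩ | ⟨b, y⟩ := p <;> obtain ⟨a', x'⟩ | ⟨b', y'⟩ := q
  · exact hpq.elim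
  · obtain ⟨⟨h, hx, -⟩, ha, rfl⟩ := hpq
    exact hE.dist_triangle.trans (Nat.add_le_add
      ((PortTree.dist_copy_le hc1 a _ _).trans (hC _ _ hx _ (port_mem h)))
      (dist_copy_slot_hierarchy_le hH hc1 hP ha))
  · obtain ⟨⟨h, hx, -⟩, rfl⟩ := hpq
    exact ((PortTree.dist_copy_le hc1 _ _ _).trans (hC _ _ (port_mem h) _ hx)).trans
      (Nat.le_add_right _ _)
  · exact hpq.elim

include hm hH hc1 in
theorem quasiIsometric_of_isPerturbation (hA : D.amalgGraph.Connected) {C N : ℕ}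
    (hC : ∀ k, ∀ x ∈ D.S1 k, ∀ y ∈ D.S1 k, G1.dist x y ≤ C)
    (hfin : ∀ u, (D.copiesMeeting {u}).Finite) (hcard : ∀ u, (D.copiesMeeting {u}).ncard ≤ N)
    (hreg : H.IsRegular) :
    QuasiIsometric D.amalgGraph ((H.portTree hreg).amalgam G1).amalgGraph := by
  have hsurj : Function.Surjective (R.collapse (H.portTree hreg)) := fun u ↦ by
    obtain ⟨a, x, rfl⟩ := PortTree.exists_eq_copy u
    exact ⟨.inl (a, x), rfl⟩
  have hto := dist_collapse_le_of_dist_toAmalg_le_one hc1 hA fun p q ↦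
    dist_collapse_le_of_toAmalg_eq hc1 (dist_collapse_le_of_below hH hc1
      (fun c ↦ H.copy_portTree_slot hreg G1) hC) hfin hcard
  have hback (p q : D.PlusV) (hpq : ((H.portTree hreg).amalgam G1).amalgGraph.dist
      (R.collapse (H.portTree hreg) p) (R.collapse (H.portTree hreg) q) ≤ 1) :
      D.amalgGraph.dist (D.toAmalg p) (D.toAmalg q) ≤
        m + (2 * (2 * m + 2 * r) + 1 + m) := by
    obtain ⟨a, x, hp, hpa⟩ := exists_collapse_eq_copy hm p
    obtain ⟨b, y, hq, hqb⟩ := exists_collapse_eq_copy hm q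
    rw [hp, hq] at hpq
    rw [dist_comm] at hqb
    exact hA.dist_triangle.trans (Nat.add_le_add hpa (hA.dist_triangle.trans (Nat.add_le_add
      (dist_toAmalg_le_of_dist_copy_le_one hc1 hA (fun _ _ _ _ ↦
        dist_toAmalg_le_of_copy_eq_copy hreg fun c ↦ dist_toAmalg_slot_le hm hH hc1 hA) hpq) hqb)))
  exact quasiIsometric_of_surjections hA (PortTree.connected_amalgGraph hc1) Quot.exists_rep hsurj
    (fun p q h ↦ (hto p q h).trans (le_max_left ..))
    (fun p q h ↦ (hback p q h).trans (le_max_right ..))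

end Comparison

end Rooting

end TreeAmalgData

/-- **Lemma.** Let `G` be an infinite locally finite quasi-transitive connected graph with a
factorisation `(G1, G2)` (realised by the tree amalgamation `D`) such that `G1` is infinite,
`G2` is finite and the amalgamating tree is not a star (it has diameter greater than `2`).
Then `G` is quasi-isometric to a non-trivial tree amalgamation `G1 ∗ G1`. -/
theorem quasiIsometric_amalg_self_of_finite_factor {V V1 V2 : Type u}
    (G : SimpleGraph V) (G1 : SimpleGraph V1) (G2 : SimpleGraph V2)
    (hc : G.Connected) (hlf : LocallyFiniteGraph G) (hqt : QuasiTransitive G)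
    (hGinf : Infinite V)
    (hc1 : G1.Connected) (hc2 : G2.Connected)
    (hlf1 : LocallyFiniteGraph G1) (hlf2 : LocallyFiniteGraph G2)
    (hqt1 : QuasiTransitive G1) (hqt2 : QuasiTransitive G2)
    (D : TreeAmalgData G1 G2) (hDa : D.FiniteAdhesion) (hDi : D.FiniteIdentification)
    (hD1 : GoodAction G1 D.S1) (hD2 : GoodAction G2 D.S2)
    (hiso : Nonempty (G ≃g D.amalgGraph))
    (h1inf : Infinite V1) (h2fin : Finite V2)
    (hstar : ∃ x y : D.VT1 ⊕ D.VT2, 2 < (bipGraph D.Tadj).dist x y) :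
    ∃ E : TreeAmalgData G1 G1, ¬ E.IsTrivial ∧ QuasiIsometric G E.amalgGraph := by
  obtain ⟨i⟩ := hiso
  have hA : D.amalgGraph.Connected := i.connected_iff.1 hc
  have hlfA : LocallyFiniteGraph D.amalgGraph := .of_iso i hlf
  have hqtA : QuasiTransitive D.amalgGraph := .of_iso i hqt
  obtain ⟨a, a', b, hab, hab', hne⟩ := TreeAmalgData.exists_tadj_tadj_ne hstar
  have : Nontrivial D.VT1 := ⟨a, a', hne⟩
  have : Nontrivial D.K2 := TreeAmalgData.nontrivial_K2 hab hab' hne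
  have : Nonempty D.K1 := ⟨D.lab1 a b hab⟩
  obtain ⟨R⟩ : Nonempty D.Rooting := TreeAmalgData.nonempty_rooting
  obtain ⟨C, hC⟩ := hD1.exists_dist_le hc1 hDa.1
  obtain ⟨ρ, hρ⟩ := R.exists_adhesion_dist_le hc1 hlf1 hC hqt1 hA hlfA hqtA
  obtain ⟨m, hm⟩ := D.exists_dist_toAmalg_inr_le hc2
  have hcopies := TreeAmalgData.exists_ncard_copiesMeeting_closedBall_le R hc1 hlf1 hC hA hlfA hqtA
  obtain ⟨B, hB⟩ := hcopies m
  obtain ⟨N, hN⟩ := hcopies 0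
  simp only [closedBall_zero hA] at hN
  obtain ⟨r, H, hreg, hH⟩ := R.exists_isRegular_isPerturbation hm hc1 hlf1 (fun u ↦ (hB u).1)
    (fun u ↦ (hB u).2) (TreeAmalgData.exists_portSet_dist_le hc1 hC hρ)
  exact ⟨(H.portTree hreg).amalgam G1, PortTree.not_isTrivial_amalgam, .of_iso hc i
    (R.quasiIsometric_of_isPerturbation hm hH hc1 hA hC (fun u ↦ (hN u).1) (fun u ↦ (hN u).2) hreg)⟩
end

section
/- Every connected locally finite quasi-transitive graph G is unvarying: there is a constant γ ≥ 1 such that for every pair of vertices u, v of G there is a γ-bilipschitz equivalence f: V(G) → V(G) (a surjection with γ⁻¹·d_G(x,y) ≤ d_G(f(x),f(y)) ≤ γ·d_G(x,y) for all x, y ∈ V(G)) with f(u) = v. -/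
open SimpleGraph

universe u v

/-!
Automorphisms bring any vertex to within a uniformly bounded distance `D` of any other one, and a
transposition then corrects the remaining error. The transposition moves every vertex by at most
`D`, and since distinct vertices are at distance at least `1`, the additive error `2 * D` it makes
in distances is absorbed by the multiplicative constant `1 + 2 * D`.
-/

/-- `f` is a (not necessarily surjective) `γ`-bilipschitz map from `G` to `H`. A bilipschitz
equivalence is a surjective such map; surjectivity is kept apart so that the distance bounds can be
composed on their own. -/
def IsBilipschitz {V : Type u} {W : Type v} (G : SimpleGraph V) (H : SimpleGraph W)
    (γ : ℝ) (f : V → W) : Prop :=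
  ∀ x y : V, γ⁻¹ * (G.dist x y : ℝ) ≤ (H.dist (f x) (f y) : ℝ) ∧
    (H.dist (f x) (f y) : ℝ) ≤ γ * (G.dist x y : ℝ)

section Isomorphisms

variable {V : Type u} {W : Type v} {G : SimpleGraph V} {H : SimpleGraph W}

theorem edist_map_le_s16 (f : G →g H) (x y : V) : H.edist (f x) (f y) ≤ G.edist x y :=
  le_iInf fun p => by simpa only [Walk.length_map] using edist_le (p.map f)

theorem edist_map_iso (g : G ≃g H) (x y : V) : H.edist (g x) (g y) = G.edist x y := by
  refine le_antisymm (edist_map_le_s16 g.toHom x y) ?_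
  simpa using edist_map_le_s16 g.symm.toHom (g x) (g y)

theorem dist_map_iso (g : G ≃g H) (x y : V) : H.dist (g x) (g y) = G.dist x y :=
  congrArg ENat.toNat (edist_map_iso g x y)

theorem isBilipschitz_one_of_iso (g : G ≃g H) : IsBilipschitz G H 1 g := fun x y => by
  simp [dist_map_iso g x y]

end Isomorphisms

theorem IsBilipschitz.comp {V W X : Type*} {G : SimpleGraph V} {H : SimpleGraph W}
    {K : SimpleGraph X} {γ δ : ℝ} {f : V → W} {g : W → X} (hg : IsBilipschitz H K δ g)
    (hf : IsBilipschitz G H γ f) (hδ : 0 ≤ δ) : IsBilipschitz G K (δ * γ) (g ∘ f) := by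
  refine fun x y => ⟨?_, ?_⟩
  · calc (δ * γ)⁻¹ * (G.dist x y : ℝ) = δ⁻¹ * (γ⁻¹ * G.dist x y) := by rw [mul_inv, mul_assoc]
      _ ≤ δ⁻¹ * H.dist (f x) (f y) := by gcongr; exact (hf x y).1
      _ ≤ K.dist (g (f x)) (g (f y)) := (hg (f x) (f y)).1
  · calc (K.dist (g (f x)) (g (f y)) : ℝ) ≤ δ * H.dist (f x) (f y) := (hg (f x) (f y)).2
      _ ≤ δ * (γ * G.dist x y) := by gcongr; exact (hf x y).2
      _ = δ * γ * G.dist x y := by rw [mul_assoc]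

section BoundedDisplacement

variable {V : Type u} {G : SimpleGraph V} {D : ℕ}

theorem dist_map_le_of_forall_dist_le (hc : G.Connected) {f : V → V}
    (hf : ∀ x, G.dist x (f x) ≤ D) (x y : V) :
    G.dist (f x) (f y) ≤ (1 + 2 * D) * G.dist x y := by
  obtain rfl | hxy := eq_or_ne x y
  · simp
  have one_le_dist : 1 ≤ G.dist x y := hc.pos_dist_of_ne hxy
  calc G.dist (f x) (f y) ≤ G.dist (f x) x + (G.dist x y + G.dist y (f y)) :=
        hc.dist_triangle.trans (Nat.add_le_add_left hc.dist_triangle _)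
    _ ≤ D + (G.dist x y + D) := by
        gcongr
        · exact dist_comm.trans_le (hf x)
        · exact hf y
    _ = G.dist x y + 2 * D * 1 := by ring
    _ ≤ G.dist x y + 2 * D * G.dist x y := by gcongr
    _ = (1 + 2 * D) * G.dist x y := by ring

theorem isBilipschitz_of_forall_dist_le (hc : G.Connected) (σ : Equiv.Perm V)
    (hσ : ∀ x, G.dist x (σ x) ≤ D) : IsBilipschitz G G (1 + 2 * D) σ := by
  have hσ_symm (x : V) : G.dist x (σ.symm x) ≤ D := by
    simpa only [σ.apply_symm_apply, dist_comm] using hσ (σ.symm x)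
  refine fun x y => ⟨?_, mod_cast dist_map_le_of_forall_dist_le hc hσ x y⟩
  have dist_le : G.dist x y ≤ (1 + 2 * D) * G.dist (σ x) (σ y) := by
    simpa only [σ.symm_apply_apply] using dist_map_le_of_forall_dist_le hc hσ_symm (σ x) (σ y)
  rw [inv_mul_le_iff₀ (by positivity)]
  exact_mod_cast dist_le

theorem dist_swap_apply_le [DecidableEq V] (a b x : V) :
    G.dist x (Equiv.swap a b x) ≤ G.dist a b := by
  obtain rfl | hxa := eq_or_ne x a
  · rw [Equiv.swap_apply_left]
  obtain rfl | hxb := eq_or_ne x b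
  · rw [Equiv.swap_apply_right, dist_comm]
  · rw [Equiv.swap_apply_of_ne_of_ne hxa hxb, dist_self]
    exact Nat.zero_le _

end BoundedDisplacement

theorem QuasiTransitive.exists_forall_iso_dist_le {V : Type u} {G : SimpleGraph V}
    (hqt : QuasiTransitive G) : ∃ D : ℕ, ∀ u v : V, ∃ g : G ≃g G, G.dist (g u) v ≤ D := by
  obtain ⟨s, hs, horbit⟩ := hqt
  obtain ⟨D, hD⟩ := (hs.image2 G.dist hs).bddAbove
  refine ⟨D, fun u v => ?_⟩
  obtain ⟨a, ha, g, rfl⟩ := horbit u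
  obtain ⟨b, hb, h, rfl⟩ := horbit v
  refine ⟨g.symm.trans h, ?_⟩
  rw [RelIso.trans_apply, RelIso.symm_apply_apply, dist_map_iso]
  exact hD (Set.mem_image2_of_mem ha hb)

theorem quasiTransitive_unvarying_general {V : Type u} (G : SimpleGraph V) (hc : G.Connected)
    {γ : ℝ} (hγ : 1 ≤ γ) {D : ℕ}
    (hD : ∀ u v : V, ∃ f : V → V, Function.Surjective f ∧ G.dist (f u) v ≤ D ∧
      IsBilipschitz G G γ f) :
    ∃ γ' : ℝ, 1 ≤ γ' ∧ ∀ u v : V, ∃ f : V → V, Function.Surjective f ∧ f u = v ∧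
      IsBilipschitz G G γ' f := by
  classical
  have one_le : (1 : ℝ) ≤ 1 + 2 * D := le_add_of_nonneg_right (by positivity)
  refine ⟨(1 + 2 * D) * γ, one_le_mul_of_one_le_of_one_le one_le hγ, fun u v => ?_⟩
  obtain ⟨f, hf_surj, hfu, hf⟩ := hD u v
  let σ := Equiv.swap (f u) v
  have hσ : IsBilipschitz G G (1 + 2 * D) σ :=
    isBilipschitz_of_forall_dist_le hc σ fun x => (dist_swap_apply_le (f u) v x).trans hfu
  exact ⟨σ ∘ f, σ.surjective.comp hf_surj, Equiv.swap_apply_left (f u) v,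
    hσ.comp hf (zero_le_one.trans one_le)⟩

/-- **Remark.** Every connected locally finite quasi-transitive graph is unvarying: there is
`γ ≥ 1` such that for all vertices `u`, `v` there is a `γ`-bilipschitz equivalence
`G → G` mapping `u` to `v`. -/
theorem quasiTransitive_unvarying {V : Type u} (G : SimpleGraph V)
    (hc : G.Connected) (hlf : LocallyFiniteGraph G) (hqt : QuasiTransitive G) :
    ∃ γ : ℝ, 1 ≤ γ ∧ ∀ u v : V, ∃ f : V → V, Function.Surjective f ∧ f u = v ∧
      ∀ x y : V, γ⁻¹ * (G.dist x y : ℝ) ≤ (G.dist (f x) (f y) : ℝ) ∧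
        (G.dist (f x) (f y) : ℝ) ≤ γ * (G.dist x y : ℝ) := by
  obtain ⟨D, hD⟩ := hqt.exists_forall_iso_dist_le
  exact quasiTransitive_unvarying_general G hc le_rfl fun u v =>
    let ⟨g, hg⟩ := hD u v
    ⟨g, g.surjective, hg, isBilipschitz_one_of_iso g⟩
end
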